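/- arXiv:2411.19592 — 3 statements merged into one kernel-verified Lean document; each statement's English description precedes it below -/
import Mathlib

section
/- Let A_0, …, A_n be real numbers with ∑_i A_i = 0 and ∑_i A_i B_i = 0, where B_0, …, B_n are strictly positive real numbers. Then the function ρ ↦ ρ^{-2} ∑_i A_i e^{-ρ B_i} is integrable on (0, ∞) and ∫_0^∞ ρ^{-2} ∑_i A_i e^{-ρ B_i} dρ = ∑_i A_i B_i log B_i. -/
open MeasureTheory Real

/-! The two hypotheses say that the weights `Aᵢ` annihilate every affine function of `Bᵢ`. So each
`e^{-ρ b}` may be replaced by its difference with the chord `(1 - b) + b e^{-ρ}` of `b ↦ e^{-ρ b}`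
over `[0, 1]`, which vanishes to second order at `ρ = 0` and stays bounded at infinity. Every term
is then integrable against `ρ⁻²`, and one integration by parts turns its integral into
`b ∫ ρ⁻¹ (e^{-ρ} - e^{-bρ}) dρ`, which is `b log b` by Frullani's formula. -/

open Set Filter Topology Asymptotics

section InvPow

variable {f f' : ℝ → ℝ}

lemma integrableOn_Ioi_inv_pow_mul_of_isBigO {n : ℕ} {r : ℝ}
    (hf : LocallyIntegrableOn f (Ioi 0)) (hf_zero : f =O[𝓝[>] 0] (· ^ n))
    (hf_top : f =O[atTop] (· ^ r)) (hr : r < n - 1) :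
    IntegrableOn (fun x ↦ (x ^ n)⁻¹ * f x) (Ioi 0) := by
  have hmellin := mellin_convergent_of_isBigO_scalar (a := -r) (b := -n) (s := 1 - n) hf
    (by simpa using hf_top) (by linarith) (by simpa using hf_zero) (by linarith)
  refine hmellin.congr_fun (fun x hx ↦ ?_) measurableSet_Ioi
  have hexp : (1 - n - 1 : ℝ) = -n := by ring
  simp only [hexp, rpow_neg (le_of_lt hx), rpow_natCast]

lemma integral_Ioi_inv_sq_mul_eq_integral_inv_mul_deriv
    (hf : ∀ x ∈ Ioi 0, HasDerivAt f (f' x) x)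
    (hf_zero : f =o[𝓝[>] 0] (fun x ↦ x)) (hf_top : f =o[atTop] (fun x ↦ x))
    (hint : IntegrableOn (fun x ↦ (x ^ 2)⁻¹ * f x) (Ioi 0))
    (hint' : IntegrableOn (fun x ↦ x⁻¹ * f' x) (Ioi 0)) :
    ∫ x in Ioi 0, (x ^ 2)⁻¹ * f x = ∫ x in Ioi 0, x⁻¹ * f' x := by
  have hdiv : (fun x ↦ x⁻¹) * f = fun x ↦ f x / x := by
    ext x
    simp [div_eq_inv_mul]
  have hparts := integral_Ioi_mul_deriv_eq_deriv_mul
    (fun x hx ↦ hasDerivAt_inv (ne_of_gt hx)) hf hint'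
    (by simpa [Pi.mul_def] using hint.neg)
    (hdiv ▸ hf_zero.tendsto_div_nhds_zero) (hdiv ▸ hf_top.tendsto_div_nhds_zero)
  simpa [integral_neg] using hparts.symm

end InvPow

section Frullani

variable {a b : ℝ}

lemma isBigO_atTop_exp_neg_mul_rpow (ha : 0 < a) (r : ℝ) :
    (fun x ↦ exp (-(a * x))) =O[atTop] (· ^ r) := by
  simpa only [neg_mul] using (isLittleO_exp_neg_mul_rpow_atTop ha r).isBigO

lemma integrableOn_Ioi_inv_mul_exp_neg_sub_exp_neg (ha : 0 < a) (hb : 0 < b) :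
    IntegrableOn (fun x ↦ x⁻¹ * (exp (-(a * x)) - exp (-(b * x)))) (Ioi 0) := by
  have hcont : Continuous fun x ↦ exp (-(a * x)) - exp (-(b * x)) := by fun_prop
  have hdiff : DifferentiableAt ℝ (fun x ↦ exp (-(a * x)) - exp (-(b * x))) 0 := by fun_prop
  have hzero : (fun x ↦ exp (-(a * x)) - exp (-(b * x))) =O[𝓝 0] (· ^ 1) := by
    simpa using hdiff.isBigO_sub
  have htop := (isBigO_atTop_exp_neg_mul_rpow ha (-1)).sub (isBigO_atTop_exp_neg_mul_rpow hb (-1))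
  simpa only [pow_one] using integrableOn_Ioi_inv_pow_mul_of_isBigO
    (hcont.locallyIntegrable.locallyIntegrableOn _) (hzero.mono nhdsWithin_le_nhds) htop
    (by norm_num)

lemma integral_Ioi_inv_mul_exp_neg_sub_exp_neg (ha : 0 < a) (hb : 0 < b) :
    ∫ x in Ioi 0, x⁻¹ * (exp (-(a * x)) - exp (-(b * x))) = log (b / a) := by
  have hcont : Continuous fun x : ℝ ↦ exp (-x) := by fun_prop
  have hzero : Tendsto (fun x : ℝ ↦ exp (-x)) (𝓝[>] 0) (𝓝 1) := by
    simpa using (hcont.tendsto 0).mono_left nhdsWithin_le_nhds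
  simpa using Frullani.integral_Ioi_eq (hcont.locallyIntegrable.locallyIntegrableOn _) ha hb hzero
    tendsto_exp_neg_atTop_nhds_zero (integrableOn_Ioi_inv_mul_exp_neg_sub_exp_neg ha hb)

end Frullani

/-- The difference at `b` between the function `b ↦ exp (-(b * x))` and its chord over `[0, 1]`,
that is, the affine function of `b` that agrees with it at `0` and at `1`. It is the kernel that
replaces the exponential to make each term integrable against `x⁻²`. -/
noncomputable def expSubChord (b x : ℝ) : ℝ :=
  exp (-(b * x)) - ((1 - b) + b * exp (-x))

section ExpSubChord

variable {b : ℝ}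

@[simp]
lemma expSubChord_zero_left (x : ℝ) : expSubChord 0 x = 0 := by
  simp [expSubChord]

lemma continuous_expSubChord (b : ℝ) : Continuous (expSubChord b) := by
  unfold expSubChord
  fun_prop

lemma hasDerivAt_expSubChord (b x : ℝ) :
    HasDerivAt (expSubChord b) (b * (exp (-x) - exp (-(b * x)))) x := by
  have hexp (c : ℝ) : HasDerivAt (fun x ↦ exp (-(c * x))) (exp (-(c * x)) * -(c * 1)) x :=
    ((hasDerivAt_id x).const_mul c).fun_neg.exp
  have hexp_one : HasDerivAt (fun x ↦ exp (-x)) (-exp (-x)) x := by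
    simpa using hexp 1
  exact ((hexp b).sub ((hexp_one.const_mul b).const_add (1 - b))).congr_deriv (by ring)

lemma expSubChord_isBigO_sq (b : ℝ) : expSubChord b =O[𝓝 0] (· ^ 2) := by
  have htaylor (c : ℝ) : (fun x ↦ exp (-(c * x)) - (1 - c * x)) =O[𝓝 0] (· ^ 2) := by
    have htendsto : Tendsto (fun x ↦ -(c * x)) (𝓝 0) (𝓝 0) :=
      Continuous.tendsto' (by fun_prop) _ _ (by simp)
    have hcomp := (exp_sub_sum_range_isBigO_pow 2).comp_tendsto htendsto
    have hsq : (fun x ↦ (-(c * x)) ^ 2) =O[𝓝 0] (· ^ 2) := by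
      simpa only [neg_sq, mul_pow] using (isBigO_refl (· ^ 2) (𝓝 (0 : ℝ))).const_mul_left (c ^ 2)
    simpa [Function.comp_def, Finset.sum_range_succ, sub_eq_add_neg] using hcomp.trans hsq
  refine ((htaylor b).sub ((htaylor 1).const_mul_left b)).congr_left fun x ↦ ?_
  simp only [expSubChord, one_mul]
  ring

lemma expSubChord_isBigO_one (hb : 0 < b) :
    expSubChord b =O[atTop] (fun _ ↦ (1 : ℝ)) := by
  have hexp {c : ℝ} (hc : 0 < c) : (fun x ↦ exp (-(c * x))) =O[atTop] (fun _ ↦ (1 : ℝ)) := by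
    simpa using isBigO_atTop_exp_neg_mul_rpow hc 0
  have hexp_one : (fun x ↦ exp (-x)) =O[atTop] (fun _ ↦ (1 : ℝ)) := by
    simpa using hexp one_pos
  exact (hexp hb).sub
    ((isBigO_const_const (1 - b) one_ne_zero _).add (hexp_one.const_mul_left b))

lemma integrableOn_Ioi_inv_sq_mul_expSubChord (hb : 0 ≤ b) :
    IntegrableOn (fun x ↦ (x ^ 2)⁻¹ * expSubChord b x) (Ioi 0) := by
  obtain rfl | hb := hb.eq_or_lt
  · simp
  · exact integrableOn_Ioi_inv_pow_mul_of_isBigO (r := 0)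
      ((continuous_expSubChord b).locallyIntegrable.locallyIntegrableOn _)
      ((expSubChord_isBigO_sq b).mono nhdsWithin_le_nhds)
      (by simpa using expSubChord_isBigO_one hb) (by norm_num)

lemma integral_Ioi_inv_sq_mul_expSubChord (hb : 0 ≤ b) :
    ∫ x in Ioi 0, (x ^ 2)⁻¹ * expSubChord b x = b * log b := by
  obtain rfl | hb := hb.eq_or_lt
  · simp
  have hzero : expSubChord b =o[𝓝[>] 0] (fun x ↦ x) :=
    ((expSubChord_isBigO_sq b).trans_isLittleO (isLittleO_pow_id one_lt_two)).mono
      nhdsWithin_le_nhds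
  have htop : expSubChord b =o[atTop] (fun x ↦ x) :=
    (expSubChord_isBigO_one hb).trans_isLittleO (isLittleO_const_id_atTop 1)
  have hfrullani_int : IntegrableOn (fun x ↦ x⁻¹ * (exp (-x) - exp (-(b * x)))) (Ioi 0) := by
    simpa using integrableOn_Ioi_inv_mul_exp_neg_sub_exp_neg one_pos hb
  have hfrullani : ∫ x in Ioi 0, x⁻¹ * (exp (-x) - exp (-(b * x))) = log b := by
    simpa using integral_Ioi_inv_mul_exp_neg_sub_exp_neg one_pos hb
  calc
    ∫ x in Ioi 0, (x ^ 2)⁻¹ * expSubChord b x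
      = ∫ x in Ioi 0, x⁻¹ * (b * (exp (-x) - exp (-(b * x)))) :=
        integral_Ioi_inv_sq_mul_eq_integral_inv_mul_deriv
          (fun x _ ↦ hasDerivAt_expSubChord b x) hzero htop
          (integrableOn_Ioi_inv_sq_mul_expSubChord hb.le)
          (by simpa only [IntegrableOn, mul_left_comm] using hfrullani_int.const_mul b)
    _ = b * log b := by
        simp only [mul_left_comm _ b, integral_const_mul, hfrullani]

end ExpSubChord

section WeightedSum

variable {ι E : Type*} [NormedAddCommGroup E] [NormedSpace ℝ E]

lemma sum_expSubChord_smul {s : Finset ι} {A : ι → E} {B : ι → ℝ} (hA : ∑ i ∈ s, A i = 0)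
    (hAB : ∑ i ∈ s, B i • A i = 0) (x : ℝ) :
    ∑ i ∈ s, expSubChord (B i) x • A i = ∑ i ∈ s, exp (-x * B i) • A i := by
  have hchord : ∑ i ∈ s, ((1 - B i) + B i * exp (-x)) • A i = 0 := by
    simp only [add_smul, sub_smul, one_smul, mul_comm _ (exp (-x)), mul_smul,
      Finset.sum_add_distrib, Finset.sum_sub_distrib, ← Finset.smul_sum, hA, hAB, sub_zero,
      smul_zero, add_zero]
  simp only [expSubChord, sub_smul, Finset.sum_sub_distrib, hchord, sub_zero, neg_mul,
    mul_comm x]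

theorem integral_inv_sq_mul_sum_exp_neg_mul_general [CompleteSpace E] (s : Finset ι) (A : ι → E)
    (B : ι → ℝ) (hB : ∀ i ∈ s, 0 ≤ B i) (hA : ∑ i ∈ s, A i = 0)
    (hAB : ∑ i ∈ s, B i • A i = 0) :
    IntegrableOn (fun ρ : ℝ ↦ (ρ ^ 2)⁻¹ • ∑ i ∈ s, exp (-ρ * B i) • A i) (Ioi 0) ∧
    ∫ ρ in Ioi (0 : ℝ), (ρ ^ 2)⁻¹ • ∑ i ∈ s, exp (-ρ * B i) • A i =
      ∑ i ∈ s, (B i * log (B i)) • A i := by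
  have hint (i) (hi : i ∈ s) :
      IntegrableOn (fun ρ ↦ ((ρ ^ 2)⁻¹ * expSubChord (B i) ρ) • A i) (Ioi 0) :=
    (integrableOn_Ioi_inv_sq_mul_expSubChord (hB i hi)).smul_const (A i)
  simp only [← sum_expSubChord_smul hA hAB, Finset.smul_sum, smul_smul]
  refine ⟨integrable_finsetSum s hint, ?_⟩
  rw [integral_finsetSum s hint]
  refine Finset.sum_congr rfl fun i hi ↦ ?_
  rw [integral_smul_const, integral_Ioi_inv_sq_mul_expSubChord (hB i hi)]

end WeightedSum

/-- If `∑ᵢ Aᵢ = 0` and `∑ᵢ Aᵢ Bᵢ = 0`, then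
`∫_0^∞ ρ⁻² ∑ᵢ Aᵢ e^{-ρ Bᵢ} dρ = ∑ᵢ Aᵢ Bᵢ log Bᵢ`. -/
theorem integral_inv_sq_mul_sum_exp_neg_mul (n : ℕ) (A B : Fin (n + 1) → ℝ)
    (hB : ∀ i, 0 < B i) (hA : ∑ i, A i = 0) (hAB : ∑ i, A i * B i = 0) :
    IntegrableOn (fun ρ : ℝ => (ρ ^ 2)⁻¹ * ∑ i, A i * Real.exp (-ρ * B i))
      (Set.Ioi 0) volume ∧
    ∫ ρ in Set.Ioi (0 : ℝ), (ρ ^ 2)⁻¹ * ∑ i, A i * Real.exp (-ρ * B i) =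
      ∑ i, A i * B i * Real.log (B i) := by
  simpa only [smul_eq_mul, mul_comm, mul_left_comm, mul_assoc] using
    integral_inv_sq_mul_sum_exp_neg_mul_general Finset.univ A B (fun i _ ↦ (hB i).le) hA
      (by simpa only [smul_eq_mul, mul_comm] using hAB)
end

section
/- Let A_0, …, A_n be real numbers with ∑_i A_i = 0, let M_0, …, M_n be strictly positive reals, let k, p ∈ ℝ⁴, and fix coordinate indices μ, ν. Then q ↦ ∑_i A_i · q_ν (q-k)_μ / ((‖q‖²+M_i²)(‖q-k‖²+M_i²)(‖q+p‖²+M_i²)) is Lebesgue integrable on ℝ⁴ and its integral equals π² times the integral over the simplex {(β₁,β₂,β₃) : β_j ≥ 0, β₁+β₂+β₃ = 1} (parametrized by β₁ ∈ [0,1], β₂ ∈ [0,1-β₁], β₃ = 1-β₁-β₂) of ∑_i A_i (β₂k - β₃p)_ν (β₃(-k-p) - β₁k)_μ / (β₁β₂‖k‖² + β₁β₃‖p‖² + β₂β₃‖k+p‖² + M_i²) - (δ_{μν}/2) ∑_i A_i log(β₁β₂‖k‖² + β₁β₃‖p‖² + β₂β₃‖k+p‖² + M_i²). -/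
open MeasureTheory Real

/-
Since the weights sum to zero, the superposition over the masses decays by one power of `‖q‖ ^ 2`
faster than each of its terms, so every integral converges absolutely and Fubini's theorem applies
to the joint integral over the momentum and the Feynman parameters. Feynman's formula
`1 / (abc) = ∫ 2 / (β₁ a + β₂ b + β₃ c) ^ 3` merges the three propagators; completing the square
turns the merged denominator into `‖q - s‖ ^ 2 + D + m`, with `s` the barycentre of the propagator
momenta. After the shift `q ↦ q + s`, rotation invariance kills the terms linear in `q` and replaces
`q_ν q_μ` by `δ_{μν} ‖q‖ ^ 2 / 4`. What remains are the one-dimensional integrals of `t` and `t ^ 2`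
against the superposition, and they produce the `1 / (D + m)` and `log (D + m)` terms.
-/

open Filter Module Set Topology
open scoped InnerProductSpace

lemma integrable_mul_of_abs_le_mul {X : Type*} [MeasurableSpace X] {ρ : Measure X}
    {g h w : X → ℝ} {C : ℝ} (hw : Integrable (fun x => h x * w x) ρ) (hg : Measurable g)
    (hh : Measurable h) (h_pos : ∀ x, 0 < h x) (hgh : ∀ x, |g x| ≤ C * h x) :
    Integrable (fun x => g x * w x) ρ := by
  refine (hw.bdd_mul (c := C) (hg.div hh).aestronglyMeasurable (.of_forall fun x => ?_)).congr
    (.of_forall fun x => ?_)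
  · rw [Pi.div_apply, norm_eq_abs, abs_div, abs_of_pos (h_pos x), div_le_iff₀ (h_pos x)]
    exact hgh x
  · have := (h_pos x).ne'
    simp only [Pi.div_apply]
    field_simp

lemma one_add_norm_sq_le_mul_one_add_norm_sub_sq {E : Type*} [SeminormedAddCommGroup E] (x s : E) :
    1 + ‖x‖ ^ 2 ≤ 2 * (1 + ‖s‖ ^ 2) * (1 + ‖x - s‖ ^ 2) := by
  have triangle : ‖x‖ ≤ ‖x - s‖ + ‖s‖ := by simpa using norm_add_le (x - s) s
  calc 1 + ‖x‖ ^ 2 ≤ 1 + (‖x - s‖ + ‖s‖) ^ 2 := by gcongr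
    _ ≤ 1 + 2 * (‖x - s‖ ^ 2 + ‖s‖ ^ 2) := by gcongr; exact add_sq_le
    _ ≤ 2 * (1 + ‖s‖ ^ 2) * (1 + ‖x - s‖ ^ 2) := by
      linarith [mul_nonneg (sq_nonneg ‖s‖) (sq_nonneg ‖x - s‖)]

section RadialMoments

variable {E : Type*} [NormedAddCommGroup E] [InnerProductSpace ℝ E]

lemma abs_inner_add_mul_inner_add_le (u v a b x : E) :
    |⟪u, x + a⟫_ℝ * ⟪v, x + b⟫_ℝ| ≤ 2 * ‖u‖ * ‖v‖ * (1 + ‖a‖) * (1 + ‖b‖) * (1 + ‖x‖ ^ 2) := by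
  have abs_inner_le (w c : E) : |⟪w, x + c⟫_ℝ| ≤ ‖w‖ * ((1 + ‖c‖) * (1 + ‖x‖)) :=
    (abs_real_inner_le_norm w (x + c)).trans <| by
      gcongr
      linarith [norm_add_le x c, mul_nonneg (norm_nonneg c) (norm_nonneg x)]
  calc |⟪u, x + a⟫_ℝ * ⟪v, x + b⟫_ℝ|
      ≤ ‖u‖ * ((1 + ‖a‖) * (1 + ‖x‖)) * (‖v‖ * ((1 + ‖b‖) * (1 + ‖x‖))) := by
        rw [abs_mul]
        gcongr <;> exact abs_inner_le _ _
    _ = ‖u‖ * ‖v‖ * (1 + ‖a‖) * (1 + ‖b‖) * (1 + ‖x‖) ^ 2 := by ring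
    _ ≤ ‖u‖ * ‖v‖ * (1 + ‖a‖) * (1 + ‖b‖) * (2 * (1 ^ 2 + ‖x‖ ^ 2)) := by
        gcongr
        exact add_sq_le
    _ = 2 * ‖u‖ * ‖v‖ * (1 + ‖a‖) * (1 + ‖b‖) * (1 + ‖x‖ ^ 2) := by ring

variable [FiniteDimensional ℝ E] [MeasurableSpace E] [BorelSpace E]

lemma integral_inner_mul_radial (f : ℝ → ℝ) (v : E) : ∫ x : E, ⟪v, x⟫_ℝ * f ‖x‖ = 0 := by
  have reflected := integral_neg_eq_self (fun x : E => ⟪v, x⟫_ℝ * f ‖x‖) volume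
  simp only [norm_neg, inner_neg_right, neg_mul, integral_neg] at reflected
  linarith

lemma integral_inner_sq_mul_radial_eq_of_norm_eq (f : ℝ → ℝ) {u v : E} (h : ‖u‖ = ‖v‖) :
    ∫ x : E, ⟪u, x⟫_ℝ ^ 2 * f ‖x‖ = ∫ x : E, ⟪v, x⟫_ℝ ^ 2 * f ‖x‖ := by
  let R := (ℝ ∙ (u - v))ᗮ.reflection
  have hR : R u = v := Submodule.reflection_sub h
  rw [← R.measurePreserving.integral_comp R.toHomeomorph.measurableEmbedding
    fun x => ⟪v, x⟫_ℝ ^ 2 * f ‖x‖]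
  simp only [← hR, LinearIsometryEquiv.inner_map_map, LinearIsometryEquiv.norm_map]

section

variable {f : ℝ → ℝ} (hf : Integrable fun x : E => (1 + ‖x‖ ^ 2) * f ‖x‖)
include hf

lemma integrable_radial : Integrable fun x : E => f ‖x‖ := by
  simpa using integrable_mul_of_abs_le_mul (g := fun _ => 1) (C := 1) hf measurable_const
    (by fun_prop) (fun x => by positivity) fun x => by simp

lemma integrable_inner_mul_radial (v : E) : Integrable fun x : E => ⟪v, x⟫_ℝ * f ‖x‖ :=
  integrable_mul_of_abs_le_mul (C := ‖v‖) hf (by fun_prop) (by fun_prop)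
    (fun x => by positivity) fun x => (abs_real_inner_le_norm v x).trans <| by
      gcongr
      nlinarith [sq_nonneg (‖x‖ - 1)]

lemma integrable_inner_mul_inner_mul_radial (u v : E) :
    Integrable fun x : E => ⟪u, x⟫_ℝ * ⟪v, x⟫_ℝ * f ‖x‖ :=
  integrable_mul_of_abs_le_mul hf (by fun_prop) (by fun_prop) (fun x => by positivity) fun x => by
    simpa using abs_inner_add_mul_inner_add_le u v 0 0 x

lemma finrank_mul_integral_inner_sq_mul_radial (v : E) :
    finrank ℝ E * ∫ x : E, ⟪v, x⟫_ℝ ^ 2 * f ‖x‖ = ‖v‖ ^ 2 * ∫ x : E, ‖x‖ ^ 2 * f ‖x‖ := by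
  let e := stdOrthonormalBasis ℝ E
  have direction_independent (i : Fin (finrank ℝ E)) :
      ∫ x : E, ⟪v, x⟫_ℝ ^ 2 * f ‖x‖ = ‖v‖ ^ 2 * ∫ x : E, ⟪e i, x⟫_ℝ ^ 2 * f ‖x‖ := by
    rw [integral_inner_sq_mul_radial_eq_of_norm_eq f (v := ‖v‖ • e i) (by simp [norm_smul]),
      ← integral_const_mul]
    simp only [real_inner_smul_left, mul_pow, mul_assoc]
  calc finrank ℝ E * ∫ x : E, ⟪v, x⟫_ℝ ^ 2 * f ‖x‖
      = ∑ i, ‖v‖ ^ 2 * ∫ x : E, ⟪e i, x⟫_ℝ ^ 2 * f ‖x‖ := by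
        simp only [← direction_independent, Finset.sum_const, Finset.card_univ, Fintype.card_fin,
          nsmul_eq_mul]
    _ = ‖v‖ ^ 2 * ∫ x : E, ∑ i, ⟪e i, x⟫_ℝ ^ 2 * f ‖x‖ := by
        rw [integral_finsetSum _ fun i _ => by
          simpa only [sq] using integrable_inner_mul_inner_mul_radial hf (e i) (e i),
          Finset.mul_sum]
    _ = ‖v‖ ^ 2 * ∫ x : E, ‖x‖ ^ 2 * f ‖x‖ := by
        simp only [← Finset.sum_mul, ← e.sum_sq_norm_inner_right, norm_eq_abs, sq_abs]

lemma finrank_mul_integral_inner_mul_inner_mul_radial (u v : E) :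
    finrank ℝ E * ∫ x : E, ⟪u, x⟫_ℝ * ⟪v, x⟫_ℝ * f ‖x‖ =
      ⟪u, v⟫_ℝ * ∫ x : E, ‖x‖ ^ 2 * f ‖x‖ := by
  have square_integrable (w : E) : Integrable fun x : E => ⟪w, x⟫_ℝ ^ 2 * f ‖x‖ := by
    simpa only [sq] using integrable_inner_mul_inner_mul_radial hf w w
  have polarization : ∫ x : E, ⟪u, x⟫_ℝ * ⟪v, x⟫_ℝ * f ‖x‖ =
      ((∫ x : E, ⟪u + v, x⟫_ℝ ^ 2 * f ‖x‖) - ∫ x : E, ⟪u - v, x⟫_ℝ ^ 2 * f ‖x‖) / 4 := by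
    rw [← integral_sub (square_integrable _) (square_integrable _), ← integral_div]
    congr with x
    rw [inner_add_left, inner_sub_left]
    ring
  rw [polarization, mul_div_assoc', mul_sub, finrank_mul_integral_inner_sq_mul_radial hf,
    finrank_mul_integral_inner_sq_mul_radial hf, norm_add_sq_real, norm_sub_sq_real]
  ring

lemma integral_inner_add_mul_inner_add_mul_radial [Nontrivial E] (u v a b : E) :
    ∫ x : E, ⟪u, x + a⟫_ℝ * ⟪v, x + b⟫_ℝ * f ‖x‖ =
      ⟪u, a⟫_ℝ * ⟪v, b⟫_ℝ * (∫ x : E, f ‖x‖) +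
        ⟪u, v⟫_ℝ / finrank ℝ E * ∫ x : E, ‖x‖ ^ 2 * f ‖x‖ := by
  have finrank_ne_zero : (finrank ℝ E : ℝ) ≠ 0 := by exact_mod_cast finrank_pos.ne'
  have second_moment := finrank_mul_integral_inner_mul_inner_mul_radial hf u v
  have expand (x : E) : ⟪u, x + a⟫_ℝ * ⟪v, x + b⟫_ℝ * f ‖x‖ =
      ⟪u, x⟫_ℝ * ⟪v, x⟫_ℝ * f ‖x‖ + ⟪v, b⟫_ℝ * (⟪u, x⟫_ℝ * f ‖x‖) +
        ⟪u, a⟫_ℝ * (⟪v, x⟫_ℝ * f ‖x‖) + ⟪u, a⟫_ℝ * ⟪v, b⟫_ℝ * f ‖x‖ := by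
    rw [inner_add_right, inner_add_right]
    ring
  have quadratic := integrable_inner_mul_inner_mul_radial hf u v
  have linear_u := (integrable_inner_mul_radial hf u).const_mul ⟪v, b⟫_ℝ
  have linear_v := (integrable_inner_mul_radial hf v).const_mul ⟪u, a⟫_ℝ
  have constant := (integrable_radial hf).const_mul (⟪u, a⟫_ℝ * ⟪v, b⟫_ℝ)
  simp only [expand]
  rw [integral_add ?_ constant, integral_add ?_ linear_v, integral_add quadratic linear_u]
  rotate_left
  · exact quadratic.add linear_u
  · exact (quadratic.add linear_u).add linear_v
  simp only [integral_const_mul, integral_inner_mul_radial]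
  field_simp
  linarith

end

lemma integral_comp_norm_sq_of_finrank_eq_two_mul_succ {k : ℕ} (hE : finrank ℝ E = 2 * (k + 1))
    (f : ℝ → ℝ) :
    ∫ x : E, f (‖x‖ ^ 2) = π ^ (k + 1) / k.factorial * ∫ t in Ioi 0, t ^ k * f t := by
  have : Nontrivial E := nontrivial_of_finrank_pos (R := ℝ) (by omega)
  have volume_unit_ball : volume.real (Metric.ball (0 : E) 1) =
      π ^ (k + 1) / (k + 1).factorial := by
    rw [measureReal_def, InnerProductSpace.volume_ball_of_dim_even hE]
    simp only [ENNReal.ofReal_one, one_pow, one_mul]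
    exact ENNReal.toReal_ofReal (by positivity)
  have square_substitution : ∫ t in Ioi 0, t ^ k * f t =
      2 * ∫ r in Ioi (0 : ℝ), r ^ (2 * (k + 1) - 1) * f (r ^ 2) := by
    rw [← integral_comp_rpow_Ioi_of_pos (p := 2) two_pos, ← integral_const_mul]
    refine setIntegral_congr_fun measurableSet_Ioi fun r _ => ?_
    simp only [rpow_ofNat, smul_eq_mul, show (2 : ℝ) - 1 = 1 by norm_num, rpow_one,
      show 2 * (k + 1) - 1 = 2 * k + 1 by omega]
    ring
  rw [integral_fun_norm_addHaar volume fun r => f (r ^ 2), volume_unit_ball, hE,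
    square_substitution, Nat.factorial_succ]
  simp only [smul_eq_mul, nsmul_eq_mul]
  push_cast
  field_simp

end RadialMoments

section PauliVillarsKernel

/-- The Pauli–Villars superposition `∑ 2 Aᵢ / (s + mᵢ)³` of three-propagator kernels with squared
masses `mᵢ`, where `s` is the Feynman-averaged squared momentum. The factor `2 = Γ(3)` is the one in
Feynman's formula for a product of three propagators. -/
noncomputable def pauliVillarsKernel {ι : Type*} [Fintype ι] (A m : ι → ℝ) (s : ℝ) : ℝ :=
  ∑ i, A i * (2 / (s + m i) ^ 3)

lemma abs_two_div_pow_three_sub_le {a b w : ℝ} (hw : 0 < w) (ha : w ≤ a) (hb : w ≤ b) :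
    |2 / a ^ 3 - 2 / b ^ 3| ≤ 6 * |b - a| / w ^ 4 := by
  have ha' : 0 < a := hw.trans_le ha
  have hb' : 0 < b := hw.trans_le hb
  have factor : 2 / a ^ 3 - 2 / b ^ 3 =
      2 * (1 / (a * b ^ 3) + 1 / (a ^ 2 * b ^ 2) + 1 / (a ^ 3 * b)) * (b - a) := by
    field_simp
    ring
  calc |2 / a ^ 3 - 2 / b ^ 3|
      = 2 * (1 / (a * b ^ 3) + 1 / (a ^ 2 * b ^ 2) + 1 / (a ^ 3 * b)) * |b - a| := by
        rw [factor, abs_mul, abs_of_pos (by positivity)]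
    _ ≤ 2 * (1 / (w * w ^ 3) + 1 / (w ^ 2 * w ^ 2) + 1 / (w ^ 3 * w)) * |b - a| := by gcongr
    _ = 6 * |b - a| / w ^ 4 := by
        field_simp
        ring

variable {ι : Type*} [Fintype ι] {A m : ι → ℝ}

lemma pauliVillarsKernel_add (s d : ℝ) :
    pauliVillarsKernel A m (s + d) = pauliVillarsKernel A (fun i => d + m i) s := by
  simp only [pauliVillarsKernel, add_assoc]

@[fun_prop]
lemma measurable_pauliVillarsKernel : Measurable (pauliVillarsKernel A m) := by
  unfold pauliVillarsKernel
  fun_prop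

lemma integrableOn_and_integral_Ioi_mul_two_div_add_pow_three {a : ℝ} (ha : 0 < a) :
    IntegrableOn (fun t => t * (2 / (t + a) ^ 3)) (Ioi 0) ∧
      ∫ t in Ioi 0, t * (2 / (t + a) ^ 3) = 1 / a := by
  have hasDeriv (t : ℝ) (ht : t ∈ Ici 0) :
      HasDerivAt (fun t => 1 / a * (1 - a * (t + a)⁻¹) ^ 2) (t * (2 / (t + a) ^ 3)) t := by
    have ht' : t + a ≠ 0 := (add_pos_of_nonneg_of_pos ht ha).ne'
    convert! (((((hasDerivAt_id' t).add_const a).fun_inv ht').const_mul a).const_sub 1).fun_pow 2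
      |>.const_mul (1 / a) using 1
    simp only [Nat.add_one_sub_one, pow_one, Nat.cast_ofNat]
    field_simp
    ring
  have nonneg (t : ℝ) (ht : t ∈ Ioi 0) : 0 ≤ t * (2 / (t + a) ^ 3) := by
    have : 0 < t := ht
    positivity
  have limit : Tendsto (fun t => 1 / a * (1 - a * (t + a)⁻¹) ^ 2) atTop (𝓝 (1 / a)) := by
    have inv_tendsto : Tendsto (fun t => (t + a)⁻¹) atTop (𝓝 0) :=
      (tendsto_atTop_add_const_right _ a tendsto_id).inv_tendsto_atTop
    simpa using ((inv_tendsto.const_mul a).const_sub 1).pow 2 |>.const_mul (1 / a)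
  refine ⟨integrableOn_Ioi_deriv_of_nonneg' hasDeriv nonneg limit, ?_⟩
  rw [integral_Ioi_of_hasDerivAt_of_nonneg' hasDeriv nonneg limit]
  simp [ha.ne']

lemma tendsto_sum_mul_log_add_atTop (hA : ∑ i, A i = 0) :
    Tendsto (fun t => ∑ i, A i * log (t + m i)) atTop (𝓝 0) := by
  have subtracted (t : ℝ) : ∑ i, A i * log (t + m i) = ∑ i, A i * (log (t + m i) - log t) := by
    simp only [mul_sub, Finset.sum_sub_distrib, ← Finset.sum_mul, hA, zero_mul, sub_zero]
  simp only [subtracted]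
  simpa using tendsto_finsetSum Finset.univ fun i _ =>
    (tendsto_log_comp_add_sub_log (m i)).const_mul (A i)

section

variable (hm : ∀ i, 0 < m i)
include hm

lemma integral_Ioi_mul_pauliVillarsKernel :
    ∫ t in Ioi 0, t * pauliVillarsKernel A m t = ∑ i, A i / m i := by
  simp only [pauliVillarsKernel, Finset.mul_sum, mul_left_comm _ (A _)]
  rw [integral_finsetSum _ fun i _ =>
    (integrableOn_and_integral_Ioi_mul_two_div_add_pow_three (hm i)).1.const_mul (A i)]
  simp only [integral_const_mul, mul_one_div,
    (integrableOn_and_integral_Ioi_mul_two_div_add_pow_three (hm _)).2]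

variable (hA : ∑ i, A i = 0)
include hA

/- Since the weights sum to zero, `2 / (s + 1) ^ 3` may be subtracted from every term. -/
lemma exists_abs_pauliVillarsKernel_le :
    ∃ C, 0 ≤ C ∧ ∀ s, 0 ≤ s → |pauliVillarsKernel A m s| ≤ C / (1 + s) ^ 4 := by
  let c (i : ι) : ℝ := min 1 (m i)
  have c_pos (i : ι) : 0 < c i := lt_min one_pos (hm i)
  refine ⟨∑ i, |A i| * (6 * |1 - m i| / c i ^ 4), by positivity, fun s hs => ?_⟩
  have subtracted : pauliVillarsKernel A m s =
      ∑ i, A i * (2 / (s + m i) ^ 3 - 2 / (s + 1) ^ 3) := by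
    simp only [pauliVillarsKernel, mul_sub, Finset.sum_sub_distrib, ← Finset.sum_mul, hA, zero_mul,
      sub_zero]
  have term_le (i : ι) :
      |2 / (s + m i) ^ 3 - 2 / (s + 1) ^ 3| ≤ 6 * |1 - m i| / (c i * (1 + s)) ^ 4 := by
    have c_le_one : c i ≤ 1 := min_le_left _ _
    have c_le_mass : c i ≤ m i := min_le_right _ _
    have := abs_two_div_pow_three_sub_le (a := s + m i) (b := s + 1) (w := c i * (1 + s))
      (by have := c_pos i; positivity) (by nlinarith) (by nlinarith)
    rwa [add_sub_add_left_eq_sub] at this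
  calc |pauliVillarsKernel A m s|
      ≤ ∑ i, |A i * (2 / (s + m i) ^ 3 - 2 / (s + 1) ^ 3)| := by
        rw [subtracted]
        exact Finset.abs_sum_le_sum_abs _ _
    _ ≤ ∑ i, |A i| * (6 * |1 - m i| / (c i * (1 + s)) ^ 4) := by
        simp only [abs_mul]
        gcongr with i
        exact term_le i
    _ = (∑ i, |A i| * (6 * |1 - m i| / c i ^ 4)) / (1 + s) ^ 4 := by
        simp only [Finset.sum_div, mul_pow, div_div, mul_div_assoc]

lemma integrableOn_Ioi_sq_mul_pauliVillarsKernel :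
    IntegrableOn (fun t => t ^ 2 * pauliVillarsKernel A m t) (Ioi 0) := by
  obtain ⟨C, -, kernel_le⟩ := exists_abs_pauliVillarsKernel_le hm hA
  have majorant : Integrable fun t : ℝ => C * (1 + ‖t‖) ^ (-2 : ℝ) :=
    (integrable_one_add_norm (by simp)).const_mul C
  refine majorant.integrableOn.mono' (by fun_prop) ?_
  filter_upwards [ae_restrict_mem measurableSet_Ioi] with t (ht : 0 < t)
  calc ‖t ^ 2 * pauliVillarsKernel A m t‖ = t ^ 2 * |pauliVillarsKernel A m t| := by
        rw [norm_mul, norm_eq_abs, norm_eq_abs, abs_of_pos (by positivity)]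
    _ ≤ (1 + t) ^ 2 * (C / (1 + t) ^ 4) := by
        gcongr
        · linarith
        · exact kernel_le t ht.le
    _ = C * (1 + ‖t‖) ^ (-2 : ℝ) := by
        rw [norm_of_nonneg ht.le, rpow_neg (by positivity), rpow_two]
        field_simp

lemma integral_Ioi_sq_mul_pauliVillarsKernel :
    ∫ t in Ioi 0, t ^ 2 * pauliVillarsKernel A m t = -2 * ∑ i, A i * log (m i) := by
  let primitive (t : ℝ) : ℝ := 2 * ∑ i, A i * log (t + m i) +
    ∑ i, A i * (4 * m i * (t + m i)⁻¹ - (m i * (t + m i)⁻¹) ^ 2)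
  have hasDeriv (t : ℝ) (ht : t ∈ Ici 0) :
      HasDerivAt primitive (t ^ 2 * pauliVillarsKernel A m t) t := by
    have sum_pos (i : ι) : 0 < t + m i := add_pos_of_nonneg_of_pos ht (hm i)
    have shift (i : ι) : HasDerivAt (fun t => t + m i) 1 t := (hasDerivAt_id' t).add_const (m i)
    have inv (i : ι) := (shift i).fun_inv (sum_pos i).ne'
    convert! ((HasDerivAt.fun_sum fun i (_ : i ∈ Finset.univ) =>
      ((shift i).log (sum_pos i).ne').const_mul (A i)).const_mul 2).add
      (HasDerivAt.fun_sum fun i (_ : i ∈ Finset.univ) =>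
        (((inv i).const_mul (4 * m i)).sub (((inv i).const_mul (m i)).fun_pow 2)).const_mul (A i))
      using 1
    simp only [pauliVillarsKernel, Finset.mul_sum, ← Finset.sum_add_distrib]
    refine Finset.sum_congr rfl fun i _ => ?_
    have := (sum_pos i).ne'
    simp only [Nat.add_one_sub_one, pow_one, Nat.cast_ofNat]
    field_simp
    ring
  have limit : Tendsto primitive atTop (𝓝 0) := by
    have inv_tendsto (i : ι) : Tendsto (fun t => (t + m i)⁻¹) atTop (𝓝 0) :=
      (tendsto_atTop_add_const_right _ (m i) tendsto_id).inv_tendsto_atTop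
    simpa using ((tendsto_sum_mul_log_add_atTop hA).const_mul 2).add
      (tendsto_finsetSum Finset.univ fun i _ => (((inv_tendsto i).const_mul (4 * m i)).sub
        (((inv_tendsto i).const_mul (m i)).pow 2)).const_mul (A i))
  rw [integral_Ioi_of_hasDerivAt_of_tendsto' hasDeriv
    (integrableOn_Ioi_sq_mul_pauliVillarsKernel hm hA) limit]
  have initial_value : primitive 0 = 2 * ∑ i, A i * log (m i) := by
    have (i : ι) : A i * (4 * m i * (m i)⁻¹ - (m i * (m i)⁻¹) ^ 2) = A i * 3 := by
      have := (hm i).ne'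
      field_simp
      ring
    simp only [primitive, zero_add, this, ← Finset.sum_mul, hA, zero_mul, add_zero]
  rw [initial_value]
  ring

lemma exists_one_add_norm_sq_mul_abs_pauliVillarsKernel_le {E : Type*}
    [SeminormedAddCommGroup E] (R : ℝ) :
    ∃ C, ∀ q s : E, ‖s‖ ≤ R → ∀ D, 0 ≤ D →
      (1 + ‖q‖ ^ 2) * |pauliVillarsKernel A m (‖q - s‖ ^ 2 + D)| ≤ C * ((1 + ‖q‖ ^ 2) ^ 3)⁻¹ := by
  obtain ⟨C, hC, kernel_le⟩ := exists_abs_pauliVillarsKernel_le hm hA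
  refine ⟨C * (2 * (1 + R ^ 2)) ^ 4, fun q s hs D hD => ?_⟩
  have shift : (1 + ‖q‖ ^ 2) / (2 * (1 + R ^ 2)) ≤ 1 + (‖q - s‖ ^ 2 + D) := by
    rw [div_le_iff₀' (by positivity)]
    calc 1 + ‖q‖ ^ 2 ≤ 2 * (1 + ‖s‖ ^ 2) * (1 + ‖q - s‖ ^ 2) :=
          one_add_norm_sq_le_mul_one_add_norm_sub_sq q s
      _ ≤ 2 * (1 + R ^ 2) * (1 + (‖q - s‖ ^ 2 + D)) := by
        gcongr
        exact le_add_of_nonneg_right hD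
  calc (1 + ‖q‖ ^ 2) * |pauliVillarsKernel A m (‖q - s‖ ^ 2 + D)|
      ≤ (1 + ‖q‖ ^ 2) * (C / (1 + (‖q - s‖ ^ 2 + D)) ^ 4) := by
        gcongr
        exact kernel_le _ (by positivity)
    _ ≤ (1 + ‖q‖ ^ 2) * (C / ((1 + ‖q‖ ^ 2) / (2 * (1 + R ^ 2))) ^ 4) := by gcongr
    _ = C * (2 * (1 + R ^ 2)) ^ 4 * ((1 + ‖q‖ ^ 2) ^ 3)⁻¹ := by field_simp

end

end PauliVillarsKernel

section FeynmanParametrization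

/-- The domain of the Feynman parameters: the simplex `β₁ + β₂ + β₃ = 1`, `βⱼ ≥ 0`, parametrized by
`(β₁, β₂)`. -/
def feynmanTriangle : Set (ℝ × ℝ) := {z | 0 ≤ z.1 ∧ 0 ≤ z.2 ∧ z.1 + z.2 ≤ 1}

lemma isCompact_feynmanTriangle : IsCompact feynmanTriangle := by
  have isClosed : IsClosed feynmanTriangle :=
    (isClosed_le continuous_const continuous_fst).inter <|
      (isClosed_le continuous_const continuous_snd).inter <|
        isClosed_le (continuous_fst.add continuous_snd) continuous_const
  have subset_square : feynmanTriangle ⊆ Icc (0 : ℝ) 1 ×ˢ Icc (0 : ℝ) 1 := by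
    rintro z ⟨hx, hy, hxy⟩
    exact ⟨⟨hx, by linarith⟩, ⟨hy, by linarith⟩⟩
  exact (isCompact_Icc.prod isCompact_Icc).of_isClosed_subset isClosed subset_square

lemma measurableSet_feynmanTriangle : MeasurableSet feynmanTriangle :=
  isCompact_feynmanTriangle.measurableSet

instance isFiniteMeasure_restrict_feynmanTriangle :
    IsFiniteMeasure (volume.restrict feynmanTriangle) :=
  ⟨by simpa using isCompact_feynmanTriangle.measure_lt_top⟩

lemma setIntegral_feynmanTriangle {F : Type*} [NormedAddCommGroup F] [NormedSpace ℝ F]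
    {f : ℝ × ℝ → F} (hf : IntegrableOn f feynmanTriangle) :
    ∫ z in feynmanTriangle, f z = ∫ x in (0 : ℝ)..1, ∫ y in (0 : ℝ)..(1 - x), f (x, y) := by
  have integrable_indicator : Integrable (feynmanTriangle.indicator f) (volume.prod volume) :=
    (integrable_indicator_iff measurableSet_feynmanTriangle).2 hf
  have slice (x : ℝ) : ∫ y, feynmanTriangle.indicator f (x, y) =
      (Icc (0 : ℝ) 1).indicator (fun x => ∫ y in (0 : ℝ)..(1 - x), f (x, y)) x := by
    by_cases hx : x ∈ Icc (0 : ℝ) 1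
    · rw [indicator_of_mem hx, intervalIntegral.integral_of_le (by linarith [hx.2]),
        ← integral_Icc_eq_integral_Ioc, ← integral_indicator measurableSet_Icc]
      congr with y
      have : (x, y) ∈ feynmanTriangle ↔ y ∈ Icc 0 (1 - x) := by
        simp only [feynmanTriangle, mem_ofPred_eq, mem_Icc, hx.1, true_and, le_sub_iff_add_le']
      simp only [indicator, this]
    · rw [indicator_of_notMem hx, ← integral_zero ℝ F]
      congr with y
      refine indicator_of_notMem (fun hz => hx ⟨hz.1, ?_⟩) f
      linarith [hz.2.1, hz.2.2]
  rw [← integral_indicator measurableSet_feynmanTriangle, Measure.volume_eq_prod,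
    integral_prod _ integrable_indicator, intervalIntegral.integral_of_le zero_le_one,
    ← integral_Icc_eq_integral_Ioc, ← integral_indicator measurableSet_Icc]
  exact integral_congr_ae (.of_forall slice)

lemma integral_two_div_affine_pow_three {α δ L : ℝ} (hL : 0 ≤ L) (hα : 0 < α)
    (hβ : 0 < α + L * δ) :
    ∫ y in (0 : ℝ)..L, 2 / (α + y * δ) ^ 3 =
      L * (α + (α + L * δ)) / (α ^ 2 * (α + L * δ) ^ 2) := by
  have affine_pos (y : ℝ) (hy : y ∈ uIcc 0 L) : 0 < α + y * δ := by
    rw [uIcc_of_le hL] at hy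
    rcases le_total 0 δ with hδ | hδ
    · linarith [mul_nonneg hy.1 hδ]
    · linarith [mul_le_mul_of_nonpos_right hy.2 hδ]
  have hasDeriv (y : ℝ) (hy : y ∈ uIcc 0 L) :
      HasDerivAt (fun y => y * (α + (α + y * δ)) / (α ^ 2 * (α + y * δ) ^ 2))
        (2 / (α + y * δ) ^ 3) y := by
    have affine : HasDerivAt (fun y => α + y * δ) δ y := by
      simpa using ((hasDerivAt_id' y).mul_const δ).const_add α
    have hy' := (affine_pos y hy).ne'
    convert! ((hasDerivAt_id' y).fun_mul (affine.const_add α)).fun_div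
      ((affine.fun_pow 2).const_mul (α ^ 2)) (by positivity) using 1
    simp only [Nat.add_one_sub_one, pow_one, Nat.cast_ofNat]
    field_simp
    ring
  rw [intervalIntegral.integral_eq_sub_of_hasDerivAt hasDeriv]
  · simp
  · refine ContinuousOn.intervalIntegrable ?_
    exact ContinuousOn.div (by fun_prop) (by fun_prop) fun y hy => by
      have := affine_pos y hy
      positivity

variable {a b c : ℝ} (ha : 0 < a) (hb : 0 < b) (hc : 0 < c)

include ha hb in
lemma convex_combination_pos {x : ℝ} (hx : x ∈ Icc (0 : ℝ) 1) : 0 < x * a + (1 - x) * b :=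
  convex_Ioi (0 : ℝ) ha hb hx.1 (sub_nonneg.2 hx.2) (add_sub_cancel x 1)

include ha hb hc

lemma feynmanTriangle_combination_pos {z : ℝ × ℝ} (hz : z ∈ feynmanTriangle) :
    0 < z.1 * a + z.2 * b + (1 - z.1 - z.2) * c := by
  obtain ⟨hx, hy, hxy⟩ := hz
  set d := min a (min b c)
  have hd : 0 < d := lt_min ha (lt_min hb hc)
  calc 0 < d := hd
    _ = z.1 * d + z.2 * d + (1 - z.1 - z.2) * d := by ring
    _ ≤ z.1 * a + z.2 * b + (1 - z.1 - z.2) * c := by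
      have : 0 ≤ 1 - z.1 - z.2 := by linarith
      gcongr <;> simp [d]

lemma integral_feynmanTriangle_slice :
    ∫ x in (0 : ℝ)..1, (1 - x) * ((x * a + (1 - x) * c) + (x * a + (1 - x) * b)) /
      ((x * a + (1 - x) * c) ^ 2 * (x * a + (1 - x) * b) ^ 2) = 1 / (a * b * c) := by
  have hasDeriv (x : ℝ) (hx : x ∈ uIcc 0 1) : HasDerivAt
      (fun x => -(1 - x) ^ 2 / (a * ((x * a + (1 - x) * c) * (x * a + (1 - x) * b))))
      ((1 - x) * ((x * a + (1 - x) * c) + (x * a + (1 - x) * b)) /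
        ((x * a + (1 - x) * c) ^ 2 * (x * a + (1 - x) * b) ^ 2)) x := by
    rw [uIcc_of_le zero_le_one] at hx
    have affine (d : ℝ) : HasDerivAt (fun x => x * a + (1 - x) * d) (a - d) x := by
      simpa [sub_eq_add_neg] using ((hasDerivAt_id' x).mul_const a).fun_add
        (((hasDerivAt_id' x).const_sub 1).mul_const d)
    have hb' := (convex_combination_pos ha hb hx).ne'
    have hc' := (convex_combination_pos ha hc hx).ne'
    convert! ((((hasDerivAt_id' x).const_sub 1).fun_pow 2).fun_neg).fun_div
      (((affine c).fun_mul (affine b)).const_mul a) (by positivity) using 1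
    simp only [Nat.add_one_sub_one, pow_one, Nat.cast_ofNat]
    field_simp
    ring
  rw [intervalIntegral.integral_eq_sub_of_hasDerivAt hasDeriv]
  · rw [sub_self, sub_zero]
    field_simp
    ring
  · refine ContinuousOn.intervalIntegrable ?_
    exact ContinuousOn.div (by fun_prop) (by fun_prop) fun x hx => by
      rw [uIcc_of_le zero_le_one] at hx
      have := convex_combination_pos ha hb hx
      have := convex_combination_pos ha hc hx
      positivity

lemma integrableOn_feynmanTriangle_two_div_pow_three :
    IntegrableOn (fun z => 2 / (z.1 * a + z.2 * b + (1 - z.1 - z.2) * c) ^ 3) feynmanTriangle :=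
  ContinuousOn.integrableOn_compact isCompact_feynmanTriangle <|
    ContinuousOn.div (by fun_prop) (by fun_prop) fun _ hz =>
      (pow_pos (feynmanTriangle_combination_pos ha hb hc hz) 3).ne'

lemma setIntegral_feynmanTriangle_two_div_pow_three :
    ∫ z in feynmanTriangle, 2 / (z.1 * a + z.2 * b + (1 - z.1 - z.2) * c) ^ 3 =
      1 / (a * b * c) := by
  rw [setIntegral_feynmanTriangle (integrableOn_feynmanTriangle_two_div_pow_three ha hb hc),
    ← integral_feynmanTriangle_slice ha hb hc]
  refine intervalIntegral.integral_congr fun x hx => ?_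
  rw [uIcc_of_le zero_le_one] at hx
  have inner_endpoint : x * a + (1 - x) * c + (1 - x) * (b - c) = x * a + (1 - x) * b := by ring
  have inner := integral_two_div_affine_pow_three (sub_nonneg.2 hx.2)
    (convex_combination_pos ha hc hx) (inner_endpoint ▸ convex_combination_pos ha hb hx)
  rw [inner_endpoint] at inner
  rw [← inner]
  refine intervalIntegral.integral_congr fun y _ => ?_
  ring_nf

end FeynmanParametrization

section FeynmanSquare

section

variable {E : Type*} [SeminormedAddCommGroup E]

/-- The constant `β₁β₂‖a - b‖² + β₁β₃‖a - c‖² + β₂β₃‖b - c‖²` left over when the square is completed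
in the Feynman-averaged denominator, with `z = (β₁, β₂)` and `β₃ = 1 - β₁ - β₂`. -/
def feynmanGap (a b c : E) (z : ℝ × ℝ) : ℝ :=
  z.1 * z.2 * ‖a - b‖ ^ 2 + z.1 * (1 - z.1 - z.2) * ‖a - c‖ ^ 2 +
    z.2 * (1 - z.1 - z.2) * ‖b - c‖ ^ 2

@[fun_prop]
lemma continuous_feynmanGap (a b c : E) : Continuous (feynmanGap a b c) := by
  unfold feynmanGap
  fun_prop

lemma feynmanGap_nonneg (a b c : E) {z : ℝ × ℝ} (hz : z ∈ feynmanTriangle) :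
    0 ≤ feynmanGap a b c z := by
  obtain ⟨hx, hy, hxy⟩ := hz
  have : 0 ≤ 1 - z.1 - z.2 := by linarith
  unfold feynmanGap
  positivity

lemma feynmanGap_zero_neg (k p : E) (z : ℝ × ℝ) : feynmanGap 0 k (-p) z =
    z.1 * z.2 * ‖k‖ ^ 2 + z.1 * (1 - z.1 - z.2) * ‖p‖ ^ 2 +
      z.2 * (1 - z.1 - z.2) * ‖k + p‖ ^ 2 := by
  simp only [feynmanGap, zero_sub, sub_neg_eq_add, zero_add, norm_neg]

variable [NormedSpace ℝ E]

/-- The barycentre `β₁ a + β₂ b + β₃ c` of the propagator momenta, about which the Feynman-averaged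
denominator is a square; the Feynman parameters are `z = (β₁, β₂)` and `β₃ = 1 - β₁ - β₂`. -/
def feynmanCenter (a b c : E) (z : ℝ × ℝ) : E :=
  z.1 • a + z.2 • b + (1 - z.1 - z.2) • c

@[fun_prop]
lemma continuous_feynmanCenter (a b c : E) : Continuous (feynmanCenter a b c) := by
  unfold feynmanCenter
  fun_prop

lemma norm_feynmanCenter_le (a b c : E) {z : ℝ × ℝ} (hz : z ∈ feynmanTriangle) :
    ‖feynmanCenter a b c z‖ ≤ ‖a‖ + ‖b‖ + ‖c‖ := by
  obtain ⟨hx, hy, hxy⟩ := hz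
  have norm_smul_le_norm {t : ℝ} (x : E) (h0 : 0 ≤ t) (h1 : t ≤ 1) : ‖t • x‖ ≤ ‖x‖ := by
    rw [norm_smul, norm_of_nonneg h0]
    exact mul_le_of_le_one_left (norm_nonneg x) h1
  refine (norm_add₃_le ..).trans ?_
  gcongr <;> exact norm_smul_le_norm _ (by linarith) (by linarith)

lemma feynmanCenter_zero_neg (k p : E) (z : ℝ × ℝ) :
    feynmanCenter 0 k (-p) z = z.2 • k - (1 - z.1 - z.2) • p := by
  unfold feynmanCenter
  module

end

variable {E : Type*} [NormedAddCommGroup E] [InnerProductSpace ℝ E]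

lemma feynman_average_norm_sub_sq (a b c q : E) (z : ℝ × ℝ) :
    z.1 * ‖q - a‖ ^ 2 + z.2 * ‖q - b‖ ^ 2 + (1 - z.1 - z.2) * ‖q - c‖ ^ 2 =
      ‖q - feynmanCenter a b c z‖ ^ 2 + feynmanGap a b c z := by
  simp only [feynmanCenter, feynmanGap, ← real_inner_self_eq_norm_sq, inner_sub_left,
    inner_sub_right, inner_add_left, inner_add_right, real_inner_smul_left, real_inner_smul_right,
    real_inner_comm a q, real_inner_comm b q, real_inner_comm c q, real_inner_comm b a,
    real_inner_comm c a, real_inner_comm c b]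
  ring

variable {ι : Type*} [Fintype ι] {A m : ι → ℝ} (hm : ∀ i, 0 < m i)
include hm

lemma setIntegral_feynmanTriangle_pauliVillarsKernel (a b c q : E) :
    ∫ z in feynmanTriangle,
        pauliVillarsKernel A m (‖q - feynmanCenter a b c z‖ ^ 2 + feynmanGap a b c z) =
      ∑ i, A i / ((‖q - a‖ ^ 2 + m i) * (‖q - b‖ ^ 2 + m i) * (‖q - c‖ ^ 2 + m i)) := by
  have propagator_pos (i : ι) (x : E) : 0 < ‖q - x‖ ^ 2 + m i :=
    add_pos_of_nonneg_of_pos (sq_nonneg _) (hm i)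
  have denominator (i : ι) (z : ℝ × ℝ) :
      ‖q - feynmanCenter a b c z‖ ^ 2 + feynmanGap a b c z + m i =
        z.1 * (‖q - a‖ ^ 2 + m i) + z.2 * (‖q - b‖ ^ 2 + m i) +
          (1 - z.1 - z.2) * (‖q - c‖ ^ 2 + m i) := by
    rw [← feynman_average_norm_sub_sq]
    ring
  simp only [pauliVillarsKernel, denominator]
  rw [integral_finsetSum _ fun i _ => (integrableOn_feynmanTriangle_two_div_pow_three
    (propagator_pos i a) (propagator_pos i b) (propagator_pos i c)).const_mul (A i)]
  simp only [integral_const_mul, setIntegral_feynmanTriangle_two_div_pow_three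
    (propagator_pos _ a) (propagator_pos _ b) (propagator_pos _ c), mul_one_div]

end FeynmanSquare

section MomentumIntegral

variable {E : Type*} [NormedAddCommGroup E] [InnerProductSpace ℝ E] [FiniteDimensional ℝ E]
  [MeasurableSpace E] [BorelSpace E]

lemma integrable_inv_one_add_norm_sq_pow_three (hE : finrank ℝ E < 6) :
    Integrable fun q : E => ((1 + ‖q‖ ^ 2) ^ 3)⁻¹ := by
  have := integrable_rpow_neg_one_add_norm_sq (E := E) (r := 6) (μ := volume) (by exact_mod_cast hE)
  refine this.congr (.of_forall fun q => ?_)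
  beta_reduce
  rw [show (-6 / 2 : ℝ) = -(3 : ℕ) by norm_num, rpow_neg (by positivity), rpow_natCast]

variable {ι : Type*} [Fintype ι] {A m : ι → ℝ} (hm : ∀ i, 0 < m i) (hA : ∑ i, A i = 0)
include hm hA

lemma integrable_one_add_norm_sq_mul_pauliVillarsKernel (hE : finrank ℝ E < 6) :
    Integrable fun q : E => (1 + ‖q‖ ^ 2) * pauliVillarsKernel A m (‖q‖ ^ 2) := by
  obtain ⟨C, kernel_le⟩ := exists_one_add_norm_sq_mul_abs_pauliVillarsKernel_le (E := E) hm hA 0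
  refine ((integrable_inv_one_add_norm_sq_pow_three hE).const_mul C).mono' (by fun_prop)
    (.of_forall fun q => ?_)
  rw [norm_mul, norm_of_nonneg (by positivity), norm_eq_abs]
  simpa using kernel_le q 0 norm_zero.le 0 le_rfl

lemma integrable_prod_one_add_norm_sq_mul_pauliVillarsKernel (hE : finrank ℝ E < 6) (a b c : E) :
    Integrable (fun w : E × (ℝ × ℝ) => (1 + ‖w.1‖ ^ 2) *
        pauliVillarsKernel A m (‖w.1 - feynmanCenter a b c w.2‖ ^ 2 + feynmanGap a b c w.2))
      (volume.prod (volume.restrict feynmanTriangle)) := by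
  obtain ⟨C, kernel_le⟩ :=
    exists_one_add_norm_sq_mul_abs_pauliVillarsKernel_le (E := E) hm hA (‖a‖ + ‖b‖ + ‖c‖)
  refine (((integrable_inv_one_add_norm_sq_pow_three hE).const_mul C).comp_fst _).mono'
    (Measurable.aestronglyMeasurable (by fun_prop)) ?_
  filter_upwards [Measure.quasiMeasurePreserving_snd.ae
    (ae_restrict_mem measurableSet_feynmanTriangle)] with w hw
  rw [norm_mul, norm_of_nonneg (by positivity), norm_eq_abs]
  exact kernel_le w.1 _ (norm_feynmanCenter_le a b c hw) _ (feynmanGap_nonneg a b c hw)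

lemma integrable_prod_inner_mul_inner_mul_pauliVillarsKernel (hE : finrank ℝ E < 6)
    (a b c r r' u v : E) :
    Integrable (fun w : E × (ℝ × ℝ) => ⟪u, w.1 - r⟫_ℝ * ⟪v, w.1 - r'⟫_ℝ *
        pauliVillarsKernel A m (‖w.1 - feynmanCenter a b c w.2‖ ^ 2 + feynmanGap a b c w.2))
      (volume.prod (volume.restrict feynmanTriangle)) :=
  integrable_mul_of_abs_le_mul
    (integrable_prod_one_add_norm_sq_mul_pauliVillarsKernel hm hA hE a b c)
    (by fun_prop) (by fun_prop) (fun w => by positivity) fun w => by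
      simpa only [sub_eq_add_neg] using abs_inner_add_mul_inner_add_le u v (-r) (-r') w.1

lemma integral_inner_mul_inner_mul_pauliVillarsKernel (hE : finrank ℝ E = 4) (u v a b : E) :
    ∫ q : E, ⟪u, q + a⟫_ℝ * ⟪v, q + b⟫_ℝ * pauliVillarsKernel A m (‖q‖ ^ 2) =
      π ^ 2 * (⟪u, a⟫_ℝ * ⟪v, b⟫_ℝ * ∑ i, A i / m i - ⟪u, v⟫_ℝ / 2 * ∑ i, A i * log (m i)) := by
  have : Nontrivial E := nontrivial_of_finrank_pos (R := ℝ) (by omega)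
  have zeroth_moment : ∫ q : E, pauliVillarsKernel A m (‖q‖ ^ 2) = π ^ 2 * ∑ i, A i / m i := by
    rw [integral_comp_norm_sq_of_finrank_eq_two_mul_succ (k := 1) hE]
    simp [integral_Ioi_mul_pauliVillarsKernel hm]
  have second_moment : ∫ q : E, ‖q‖ ^ 2 * pauliVillarsKernel A m (‖q‖ ^ 2) =
      π ^ 2 * (-2 * ∑ i, A i * log (m i)) := by
    rw [integral_comp_norm_sq_of_finrank_eq_two_mul_succ (k := 1) hE
      fun t => t * pauliVillarsKernel A m t, ← integral_Ioi_sq_mul_pauliVillarsKernel hm hA]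
    simp [← mul_assoc, sq]
  rw [integral_inner_add_mul_inner_add_mul_radial (f := fun t => pauliVillarsKernel A m (t ^ 2))
    (integrable_one_add_norm_sq_mul_pauliVillarsKernel hm hA (by omega)), zeroth_moment,
    second_moment, hE]
  push_cast
  ring

lemma integral_inner_sub_mul_inner_sub_mul_pauliVillarsKernel (hE : finrank ℝ E = 4) {D : ℝ}
    (hD : 0 ≤ D) (r r' s u v : E) :
    ∫ q : E, ⟪u, q - r⟫_ℝ * ⟪v, q - r'⟫_ℝ * pauliVillarsKernel A m (‖q - s‖ ^ 2 + D) =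
      π ^ 2 * (⟪u, s - r⟫_ℝ * ⟪v, s - r'⟫_ℝ * ∑ i, A i / (D + m i) -
        ⟪u, v⟫_ℝ / 2 * ∑ i, A i * log (D + m i)) := by
  have shifted_mass_pos (i : ι) : 0 < D + m i := add_pos_of_nonneg_of_pos hD (hm i)
  rw [← integral_inner_mul_inner_mul_pauliVillarsKernel shifted_mass_pos hA hE u v (s - r) (s - r'),
    ← integral_add_right_eq_self _ s]
  simp only [add_sub_assoc, sub_self, add_zero, pauliVillarsKernel_add]

end MomentumIntegral

theorem integral_pauliVillars_three_propagators_two_coords_general {E : Type*}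
    [NormedAddCommGroup E] [InnerProductSpace ℝ E] [FiniteDimensional ℝ E] [MeasurableSpace E]
    [BorelSpace E] (hE : finrank ℝ E = 4) {ι : Type*} [Fintype ι] {A m : ι → ℝ}
    (hm : ∀ i, 0 < m i) (hA : ∑ i, A i = 0) (a b c r r' u v : E) :
    Integrable (fun q : E => ∑ i, A i * ⟪u, q - r⟫_ℝ * ⟪v, q - r'⟫_ℝ /
      ((‖q - a‖ ^ 2 + m i) * (‖q - b‖ ^ 2 + m i) * (‖q - c‖ ^ 2 + m i))) ∧
    ∫ q : E, ∑ i, A i * ⟪u, q - r⟫_ℝ * ⟪v, q - r'⟫_ℝ /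
        ((‖q - a‖ ^ 2 + m i) * (‖q - b‖ ^ 2 + m i) * (‖q - c‖ ^ 2 + m i)) =
      π ^ 2 * ∫ x in (0 : ℝ)..1, ∫ y in (0 : ℝ)..(1 - x),
        ((∑ i, A i * ⟪u, feynmanCenter a b c (x, y) - r⟫_ℝ *
              ⟪v, feynmanCenter a b c (x, y) - r'⟫_ℝ / (feynmanGap a b c (x, y) + m i)) -
          ⟪u, v⟫_ℝ / 2 * ∑ i, A i * log (feynmanGap a b c (x, y) + m i)) := by
  have joint_integrable :=
    integrable_prod_inner_mul_inner_mul_pauliVillarsKernel hm hA (by omega) a b c r r' u v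
  have feynman_parametrization (q : E) :
      ∫ z in feynmanTriangle, ⟪u, q - r⟫_ℝ * ⟪v, q - r'⟫_ℝ *
          pauliVillarsKernel A m (‖q - feynmanCenter a b c z‖ ^ 2 + feynmanGap a b c z) =
        ∑ i, A i * ⟪u, q - r⟫_ℝ * ⟪v, q - r'⟫_ℝ /
          ((‖q - a‖ ^ 2 + m i) * (‖q - b‖ ^ 2 + m i) * (‖q - c‖ ^ 2 + m i)) := by
    rw [integral_const_mul, setIntegral_feynmanTriangle_pauliVillarsKernel hm, Finset.mul_sum]
    exact Finset.sum_congr rfl fun i _ => by ring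
  have momentum_integral (z : ℝ × ℝ) (hz : z ∈ feynmanTriangle) :
      ∫ q : E, ⟪u, q - r⟫_ℝ * ⟪v, q - r'⟫_ℝ *
          pauliVillarsKernel A m (‖q - feynmanCenter a b c z‖ ^ 2 + feynmanGap a b c z) =
        π ^ 2 * ((∑ i, A i * ⟪u, feynmanCenter a b c z - r⟫_ℝ *
              ⟪v, feynmanCenter a b c z - r'⟫_ℝ / (feynmanGap a b c z + m i)) -
          ⟪u, v⟫_ℝ / 2 * ∑ i, A i * log (feynmanGap a b c z + m i)) := by
    rw [integral_inner_sub_mul_inner_sub_mul_pauliVillarsKernel hm hA hE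
      (feynmanGap_nonneg a b c hz), Finset.mul_sum]
    congr! 3 with i
    ring
  have parameter_integrable := integrableOn_congr_fun momentum_integral
    measurableSet_feynmanTriangle |>.1 joint_integrable.integral_prod_right
  simp only [← feynman_parametrization]
  refine ⟨joint_integrable.integral_prod_left, ?_⟩
  rw [integral_integral_swap joint_integrable,
    setIntegral_congr_fun measurableSet_feynmanTriangle momentum_integral,
    setIntegral_feynmanTriangle parameter_integrable]
  simp only [intervalIntegral.integral_const_mul]

/-- Identity (int-q7): the three-propagator Pauli–Villars integral with two
momentum factors, in Feynman parametrization over the standard 2-simplex. -/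
theorem integral_pauliVillars_three_propagators_two_coords (n : ℕ)
    (A M : Fin (n + 1) → ℝ) (hM : ∀ i, 0 < M i) (hA : ∑ i, A i = 0)
    (k p : EuclideanSpace ℝ (Fin 4)) (μ ν : Fin 4) :
    Integrable (fun q : EuclideanSpace ℝ (Fin 4) =>
      ∑ i, A i * q ν * (q - k) μ /
        ((‖q‖ ^ 2 + M i ^ 2) * (‖q - k‖ ^ 2 + M i ^ 2) * (‖q + p‖ ^ 2 + M i ^ 2))) ∧
    ∫ q : EuclideanSpace ℝ (Fin 4),
        ∑ i, A i * q ν * (q - k) μ /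
          ((‖q‖ ^ 2 + M i ^ 2) * (‖q - k‖ ^ 2 + M i ^ 2) * (‖q + p‖ ^ 2 + M i ^ 2)) =
      π ^ 2 * ∫ β₁ in (0 : ℝ)..1, ∫ β₂ in (0 : ℝ)..(1 - β₁),
        ((∑ i, A i * ((β₂ • k - (1 - β₁ - β₂) • p) ν) *
              (((1 - β₁ - β₂) • (-k - p) - β₁ • k) μ) /
            (β₁ * β₂ * ‖k‖ ^ 2 + β₁ * (1 - β₁ - β₂) * ‖p‖ ^ 2 +
              β₂ * (1 - β₁ - β₂) * ‖k + p‖ ^ 2 + M i ^ 2)) -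
          (if μ = ν then (1 : ℝ) else 0) / 2 *
            ∑ i, A i * Real.log (β₁ * β₂ * ‖k‖ ^ 2 + β₁ * (1 - β₁ - β₂) * ‖p‖ ^ 2 +
              β₂ * (1 - β₁ - β₂) * ‖k + p‖ ^ 2 + M i ^ 2)) := by
  have center_sub (x y : ℝ) :
      y • k - (1 - x - y) • p - k = (1 - x - y) • (-k - p) - x • k := by module
  simpa only [feynmanCenter_zero_neg, feynmanGap_zero_neg, center_sub, sub_zero, sub_neg_eq_add,
    EuclideanSpace.inner_single_left, map_one, one_mul, PiLp.single_apply, eq_comm (a := ν)] using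
    integral_pauliVillars_three_propagators_two_coords_general finrank_euclideanSpace_fin
      (fun i => pow_pos (hM i) 2) hA 0 k (-p) 0 k (.single ν 1) (.single μ 1)
end

section
/- Let M > 0, k, p ∈ ℝ⁴, and fix a coordinate index μ. Then q ↦ (q-k)_μ/((‖q‖²+M²)(‖q-k‖²+M²)(‖q+p‖²+M²)) is Lebesgue integrable on ℝ⁴ and ∫_{ℝ⁴} (q-k)_μ dq / ((‖q‖²+M²)(‖q-k‖²+M²)(‖q+p‖²+M²)) = π² ∫_0^1 dβ₁ ∫_0^{1-β₁} dβ₂ of (β₃(-k-p) - β₁k)_μ/(β₁β₂‖k‖² + β₁β₃‖p‖² + β₂β₃‖k+p‖² + M²) with β₃ = 1-β₁-β₂. -/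
open MeasureTheory Real

/-!
Feynman's identity writes the product of three propagators `1 / A`, `1 / B`, `1 / C` as the
integral of `2 / (x A + y B + (1 - x - y) C) ^ 3` over the 2-simplex. After exchanging the two
integrations, completing the square turns the combined denominator into `‖q - s‖ ^ 2 + Δ`, where
`s` is the barycentre of the three centres. Translating by `s` and discarding the odd part of the
numerator leaves a radial integral, which Schwinger's `∫ t ^ 2 * exp (-t r) = 2 r ^ (-3)` reduces
to a Gaussian one. The exchange is justified by domination: the combined denominator is at least
the smallest of `A`, `B`, `C`, so its inverse power is at most the sum of theirs.
-/

section SchwingerParametrization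

open Module Set

lemma integrableOn_rpow_mul_exp_neg_mul_Ioi {a r : ℝ} (ha : 0 < a) (hr : 0 < r) :
    IntegrableOn (fun t : ℝ => t ^ (a - 1) * exp (-(r * t))) (Ioi 0) := by
  refine Integrable.of_integral_ne_zero ?_
  rw [integral_rpow_mul_exp_neg_mul_Ioi ha hr]
  have := Gamma_pos_of_pos ha
  positivity

lemma integral_rpow_mul_exp_neg_mul_Ioi_eq_rpow_neg {a r : ℝ} (ha : 0 < a) (hr : 0 < r) :
    ∫ t in Ioi 0, t ^ (a - 1) * exp (-(r * t)) = r ^ (-a) * Gamma a := by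
  rw [integral_rpow_mul_exp_neg_mul_Ioi ha hr, one_div, inv_rpow hr.le, rpow_neg hr.le]

lemma exp_neg_add_mul (r c t : ℝ) : exp (-((r + c) * t)) = exp (-t * r) * exp (-(c * t)) := by
  rw [← exp_add]
  ring_nf

variable {E : Type*} [NormedAddCommGroup E] [InnerProductSpace ℝ E] [FiniteDimensional ℝ E]
  [MeasurableSpace E] [BorelSpace E] {c s t : ℝ}

lemma integrable_exp_neg_norm_sq_add_mul (ht : 0 < t) :
    Integrable fun q : E => exp (-((‖q‖ ^ 2 + c) * t)) := by
  simp_rw [exp_neg_add_mul]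
  refine Integrable.mul_const (.of_integral_ne_zero ?_) _
  rw [GaussianFourier.integral_rexp_neg_mul_sq_norm ht]
  positivity

lemma integral_rpow_mul_exp_neg_norm_sq_add_mul (ht : 0 < t) :
    ∫ q : E, t ^ (s - 1) * exp (-((‖q‖ ^ 2 + c) * t)) =
      π ^ (finrank ℝ E / 2 : ℝ) * (t ^ (s - finrank ℝ E / 2 - 1) * exp (-(c * t))) := by
  simp_rw [exp_neg_add_mul]
  rw [integral_const_mul, integral_mul_const, GaussianFourier.integral_rexp_neg_mul_sq_norm ht,
    div_rpow pi_pos.le ht.le, sub_right_comm, rpow_sub ht (s - 1)]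
  ring

lemma integrable_prod_rpow_mul_exp_neg_norm_sq_add_mul (hc : 0 < c) (hs : finrank ℝ E / 2 < s) :
    Integrable (fun z : ℝ × E => z.1 ^ (s - 1) * exp (-((‖z.2‖ ^ 2 + c) * z.1)))
      ((volume.restrict (Ioi 0)).prod volume) := by
  refine (integrable_prod_iff (Measurable.aestronglyMeasurable (by fun_prop))).2 ⟨?_, ?_⟩
  · filter_upwards [ae_restrict_mem measurableSet_Ioi] with t ht
    exact (integrable_exp_neg_norm_sq_add_mul ht).const_mul _
  · have h : IntegrableOn (fun t : ℝ => π ^ (finrank ℝ E / 2 : ℝ) *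
        (t ^ (s - finrank ℝ E / 2 - 1) * exp (-(c * t)))) (Ioi 0) :=
      (integrableOn_rpow_mul_exp_neg_mul_Ioi (sub_pos.2 hs) hc).const_mul _
    refine h.congr_fun (fun t (ht : 0 < t) => ?_) measurableSet_Ioi
    simp_rw [← integral_rpow_mul_exp_neg_norm_sq_add_mul ht]
    exact integral_congr_ae (.of_forall fun q => (norm_of_nonneg (by positivity)).symm)

lemma integrable_norm_sq_add_rpow_neg (hc : 0 < c) (hs : finrank ℝ E / 2 < s) :
    Integrable fun q : E => (‖q‖ ^ 2 + c) ^ (-s) := by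
  have hs₀ : 0 < s := lt_of_le_of_lt (by positivity) hs
  refine (integrable_mul_const_iff (Gamma_pos_of_pos hs₀).ne'.isUnit _).1 ?_
  refine (integrable_prod_rpow_mul_exp_neg_norm_sq_add_mul hc hs).integral_prod_right.congr ?_
  filter_upwards with q
  exact integral_rpow_mul_exp_neg_mul_Ioi_eq_rpow_neg hs₀ (by positivity)

theorem integral_norm_sq_add_rpow_neg (hc : 0 < c) (hs : finrank ℝ E / 2 < s) :
    ∫ q : E, (‖q‖ ^ 2 + c) ^ (-s) =
      π ^ (finrank ℝ E / 2 : ℝ) * Gamma (s - finrank ℝ E / 2) / Gamma s *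
        c ^ (finrank ℝ E / 2 - s) := by
  have hs₀ : 0 < s := lt_of_le_of_lt (by positivity) hs
  rw [div_mul_eq_mul_div, eq_div_iff (Gamma_pos_of_pos hs₀).ne']
  calc (∫ q : E, (‖q‖ ^ 2 + c) ^ (-s)) * Gamma s
      = ∫ q : E, ∫ t in Ioi 0, t ^ (s - 1) * exp (-((‖q‖ ^ 2 + c) * t)) := by
        rw [← integral_mul_const]
        exact integral_congr_ae (.of_forall fun q =>
          (integral_rpow_mul_exp_neg_mul_Ioi_eq_rpow_neg hs₀ (by positivity)).symm)
    _ = ∫ t in Ioi 0, ∫ q : E, t ^ (s - 1) * exp (-((‖q‖ ^ 2 + c) * t)) :=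
        (integral_integral_swap (integrable_prod_rpow_mul_exp_neg_norm_sq_add_mul hc hs)).symm
    _ = ∫ t in Ioi 0, π ^ (finrank ℝ E / 2 : ℝ) *
          (t ^ (s - finrank ℝ E / 2 - 1) * exp (-(c * t))) :=
        setIntegral_congr_fun measurableSet_Ioi fun t ht =>
          integral_rpow_mul_exp_neg_norm_sq_add_mul ht
    _ = π ^ (finrank ℝ E / 2 : ℝ) * Gamma (s - finrank ℝ E / 2) * c ^ (finrank ℝ E / 2 - s) := by
        rw [integral_const_mul, integral_rpow_mul_exp_neg_mul_Ioi_eq_rpow_neg (sub_pos.2 hs) hc,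
          neg_sub]
        ring

end SchwingerParametrization

section LinearNumerator

open Module

lemma integral_dual_mul_radial_eq_zero {V : Type*} [NormedAddCommGroup V] [NormedSpace ℝ V]
    [MeasurableSpace V] [MeasurableNeg V] (μ : Measure V) [μ.IsNegInvariant] (ℓ : StrongDual ℝ V)
    (g : ℝ → ℝ) : ∫ q, ℓ q * g ‖q‖ ∂μ = 0 := by
  have h := integral_neg_eq_self (fun q => ℓ q * g ‖q‖) μ
  simp only [map_neg, norm_neg, neg_mul, integral_neg] at h
  linarith

variable {E : Type*} [NormedAddCommGroup E] [InnerProductSpace ℝ E] [FiniteDimensional ℝ E]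
  [MeasurableSpace E] [BorelSpace E] {c s : ℝ}

lemma integrable_dual_mul_norm_sq_add_rpow_neg (hc : 0 < c) (hs : (finrank ℝ E + 1) / 2 < s)
    (ℓ : StrongDual ℝ E) : Integrable fun q : E => ℓ q * (‖q‖ ^ 2 + c) ^ (-s) := by
  have h : Integrable fun q : E => ‖ℓ‖ * (‖q‖ ^ 2 + c) ^ (-(s - 1 / 2)) :=
    (integrable_norm_sq_add_rpow_neg hc (by linarith)).const_mul _
  refine h.mono' (Measurable.aestronglyMeasurable (by fun_prop)) (.of_forall fun q => ?_)
  have hq : ‖q‖ ≤ (‖q‖ ^ 2 + c) ^ (1 / 2 : ℝ) := by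
    rw [← sqrt_eq_rpow]
    exact le_sqrt_of_sq_le (by linarith)
  calc ‖ℓ q * (‖q‖ ^ 2 + c) ^ (-s)‖
      = ‖ℓ q‖ * (‖q‖ ^ 2 + c) ^ (-s) := by
        rw [norm_mul, norm_of_nonneg (r := _ ^ _) (by positivity)]
    _ ≤ ‖ℓ‖ * (‖q‖ ^ 2 + c) ^ (1 / 2 : ℝ) * (‖q‖ ^ 2 + c) ^ (-s) := by
        gcongr
        exact ℓ.le_opNorm_of_le hq
    _ = ‖ℓ‖ * (‖q‖ ^ 2 + c) ^ (-(s - 1 / 2)) := by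
        rw [mul_assoc, ← rpow_add (by positivity)]
        ring_nf

lemma integrable_dual_sub_mul_norm_sub_sq_add_rpow_neg (hc : 0 < c)
    (hs : (finrank ℝ E + 1) / 2 < s) (ℓ : StrongDual ℝ E) (a v : E) :
    Integrable fun q : E => ℓ (q - v) * (‖q - a‖ ^ 2 + c) ^ (-s) := by
  have hs' : finrank ℝ E / 2 < s := by linarith
  have hsplit (q : E) : ℓ (q - v) * (‖q - a‖ ^ 2 + c) ^ (-s) =
      ℓ (q - a) * (‖q - a‖ ^ 2 + c) ^ (-s) + ℓ (a - v) * (‖q - a‖ ^ 2 + c) ^ (-s) := by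
    rw [← add_mul, ← map_add, sub_add_sub_cancel]
  simp_rw [hsplit]
  exact ((integrable_dual_mul_norm_sq_add_rpow_neg hc hs ℓ).comp_sub_right a).add
    (((integrable_norm_sq_add_rpow_neg hc hs').comp_sub_right a).const_mul _)

theorem integral_dual_sub_mul_norm_sub_sq_add_rpow_neg (hc : 0 < c)
    (hs : (finrank ℝ E + 1) / 2 < s) (ℓ : StrongDual ℝ E) (a v : E) :
    ∫ q : E, ℓ (q - v) * (‖q - a‖ ^ 2 + c) ^ (-s) =
      π ^ (finrank ℝ E / 2 : ℝ) * Gamma (s - finrank ℝ E / 2) / Gamma s *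
        (ℓ (a - v) * c ^ (finrank ℝ E / 2 - s)) := by
  have hs' : finrank ℝ E / 2 < s := by linarith
  calc ∫ q : E, ℓ (q - v) * (‖q - a‖ ^ 2 + c) ^ (-s)
      = ∫ q : E, (ℓ q * (‖q‖ ^ 2 + c) ^ (-s) + ℓ (a - v) * (‖q‖ ^ 2 + c) ^ (-s)) := by
        rw [← integral_add_right_eq_self _ a]
        simp_rw [add_sub_cancel_right, add_sub_assoc, map_add, add_mul]
    _ = ℓ (a - v) * ∫ q : E, (‖q‖ ^ 2 + c) ^ (-s) := by
        rw [integral_add (integrable_dual_mul_norm_sq_add_rpow_neg hc hs ℓ)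
            ((integrable_norm_sq_add_rpow_neg hc hs').const_mul _), integral_const_mul,
          integral_dual_mul_radial_eq_zero volume ℓ fun r => (r ^ 2 + c) ^ (-s), zero_add]
    _ = _ := by
        rw [integral_norm_sq_add_rpow_neg hc hs']
        ring

end LinearNumerator

section FeynmanSimplex

open Set

/-- The 2-simplex of Feynman parameters, encoded by its first two barycentric coordinates: the
third one is `1 - z.1 - z.2`. -/
def feynmanSimplex : Set (ℝ × ℝ) := {z | 0 ≤ z.1 ∧ 0 ≤ z.2 ∧ 0 ≤ 1 - z.1 - z.2}

lemma isCompact_feynmanSimplex : IsCompact feynmanSimplex := by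
  refine (isCompact_Icc (a := ((0 : ℝ), (0 : ℝ))) (b := (1, 1))).of_isClosed_subset ?_
    fun z ⟨hx, hy, hz⟩ => ⟨⟨hx, hy⟩, ⟨by dsimp only; linarith, by dsimp only; linarith⟩⟩
  exact (isClosed_le continuous_const continuous_fst).inter
    ((isClosed_le continuous_const continuous_snd).inter
      (isClosed_le continuous_const ((continuous_const.sub continuous_fst).sub continuous_snd)))

instance isFiniteMeasure_restrict_feynmanSimplex :
    IsFiniteMeasure (volume.restrict feynmanSimplex) :=
  isFiniteMeasure_restrict.2 isCompact_feynmanSimplex.measure_lt_top.ne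

lemma setIntegral_feynmanSimplex {F : Type*} [NormedAddCommGroup F] [NormedSpace ℝ F]
    {f : ℝ × ℝ → F} (hf : IntegrableOn f feynmanSimplex) :
    ∫ z in feynmanSimplex, f z = ∫ x in (0 : ℝ)..1, ∫ y in (0 : ℝ)..(1 - x), f (x, y) := by
  have hm := isCompact_feynmanSimplex.measurableSet
  have slice (x : ℝ) : (Icc (0 : ℝ) 1).indicator (fun x => ∫ y in (0 : ℝ)..(1 - x), f (x, y)) x =
      ∫ y, feynmanSimplex.indicator f (x, y) := by
    by_cases hx : x ∈ Icc (0 : ℝ) 1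
    · rw [indicator_of_mem hx, intervalIntegral.integral_of_le (sub_nonneg.2 hx.2),
        ← integral_Icc_eq_integral_Ioc, ← integral_indicator measurableSet_Icc]
      congr 1 with y
      simp [indicator, feynmanSimplex, hx.1]
    · rw [indicator_of_notMem hx, eq_comm]
      refine integral_eq_zero_of_ae (.of_forall fun y => indicator_of_notMem ?_ _)
      rintro ⟨hx₀, hy, hxy⟩
      exact hx ⟨hx₀, by linarith⟩
  rw [← integral_indicator hm, Measure.volume_eq_prod,
    integral_prod _ (Measure.volume_eq_prod ℝ ℝ ▸ hf.integrable_indicator hm),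
    intervalIntegral.integral_of_le zero_le_one, ← integral_Icc_eq_integral_Ioc,
    ← integral_indicator measurableSet_Icc]
  simp_rw [slice]

/-- The affine combination of `A`, `B`, `C` with the barycentric coordinates encoded by `z`. It
serves both for Feynman's combined denominator and for the barycentre of the propagators. -/
def feynmanCombination {V : Type*} [AddCommGroup V] [Module ℝ V] (A B C : V) (z : ℝ × ℝ) : V :=
  z.1 • A + z.2 • B + (1 - z.1 - z.2) • C

@[fun_prop]
lemma continuous_feynmanCombination {V : Type*} [AddCommGroup V] [Module ℝ V] [TopologicalSpace V]
    [ContinuousAdd V] [ContinuousSMul ℝ V] (A B C : V) : Continuous (feynmanCombination A B C) := by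
  unfold feynmanCombination
  fun_prop

variable {A B C : ℝ} {z : ℝ × ℝ}

lemma le_feynmanCombination {m : ℝ} (hA : m ≤ A) (hB : m ≤ B) (hC : m ≤ C)
    (hz : z ∈ feynmanSimplex) : m ≤ feynmanCombination A B C z := by
  obtain ⟨hx, hy, hxy⟩ := hz
  calc m = z.1 • m + z.2 • m + (1 - z.1 - z.2) • m := by simp only [smul_eq_mul]; ring
    _ ≤ _ := by unfold feynmanCombination; gcongr

lemma feynmanCombination_pos (hA : 0 < A) (hB : 0 < B) (hC : 0 < C) (hz : z ∈ feynmanSimplex) :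
    0 < feynmanCombination A B C z :=
  (lt_min hA (lt_min hB hC)).trans_le <| le_feynmanCombination (min_le_left _ _)
    ((min_le_right _ _).trans (min_le_left _ _)) ((min_le_right _ _).trans (min_le_right _ _)) hz

lemma feynmanCombination_rpow_neg_le {s : ℝ} (hs : 0 ≤ s) (hA : 0 < A) (hB : 0 < B) (hC : 0 < C)
    (hz : z ∈ feynmanSimplex) :
    feynmanCombination A B C z ^ (-s) ≤ A ^ (-s) + B ^ (-s) + C ^ (-s) := by
  have hA' : 0 < A ^ (-s) := by positivity
  have hB' : 0 < B ^ (-s) := by positivity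
  have hC' : 0 < C ^ (-s) := by positivity
  have of_le {m : ℝ} (hm : 0 < m) (h : m ≤ A ∧ m ≤ B ∧ m ≤ C) :
      feynmanCombination A B C z ^ (-s) ≤ m ^ (-s) :=
    rpow_le_rpow_of_nonpos hm (le_feynmanCombination h.1 h.2.1 h.2.2 hz) (neg_nonpos.2 hs)
  have least : (A ≤ A ∧ A ≤ B ∧ A ≤ C) ∨ (B ≤ A ∧ B ≤ B ∧ B ≤ C) ∨ (C ≤ A ∧ C ≤ B ∧ C ≤ C) := by
    grind
  rcases least with h | h | h
  · linarith [of_le hA h]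
  · linarith [of_le hB h]
  · linarith [of_le hC h]

end FeynmanSimplex

section FeynmanIdentity

open Set

variable {A B C : ℝ}

lemma integral_two_div_add_mul_cube {u w L : ℝ} (h : ∀ y ∈ uIcc 0 L, 0 < u + y * w) :
    ∫ y in (0 : ℝ)..L, 2 / (u + y * w) ^ 3 =
      L * (u + (u + L * w)) / (u ^ 2 * (u + L * w) ^ 2) := by
  have hu : 0 < u := by simpa using h 0 left_mem_uIcc
  -- This antiderivative, unlike `-1 / (w * (u + y * w) ^ 2)`, also covers `w = 0`.
  have deriv (y : ℝ) (hy : y ∈ uIcc 0 L) :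
      HasDerivAt (fun y => y * (u + (u + y * w)) / (u ^ 2 * (u + y * w) ^ 2))
        (2 / (u + y * w) ^ 3) y := by
    have hy₀ := h y hy
    have hlin : HasDerivAt (fun y => u + y * w) w y := by
      simpa using ((hasDerivAt_id y).mul_const w).const_add u
    convert! ((hasDerivAt_id y).fun_mul (hlin.const_add u)).fun_div
      ((hlin.fun_pow 2).const_mul (u ^ 2)) (by positivity) using 1
    simp only [id]
    field_simp
    ring
  have hcont : ContinuousOn (fun y => 2 / (u + y * w) ^ 3) (uIcc 0 L) :=
    .div (by fun_prop) (by fun_prop) fun y hy => (pow_pos (h y hy) 3).ne'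
  rw [intervalIntegral.integral_eq_sub_of_hasDerivAt deriv hcont.intervalIntegrable]
  simp

lemma integral_two_div_feynmanCombination_cube (hA : 0 < A) (hB : 0 < B) (hC : 0 < C) {x : ℝ}
    (hx : x ∈ Icc (0 : ℝ) 1) :
    ∫ y in (0 : ℝ)..(1 - x), 2 / feynmanCombination A B C (x, y) ^ 3 =
      (1 - x) * ((x * A + (1 - x) * C) + (x * A + (1 - x) * B)) /
        ((x * A + (1 - x) * C) ^ 2 * (x * A + (1 - x) * B) ^ 2) := by
  have affine (y : ℝ) : feynmanCombination A B C (x, y) = (x * A + (1 - x) * C) + y * (B - C) := by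
    simp only [feynmanCombination, smul_eq_mul]
    ring
  have hpos (y : ℝ) (hy : y ∈ uIcc 0 (1 - x)) : 0 < (x * A + (1 - x) * C) + y * (B - C) := by
    rw [uIcc_of_le (sub_nonneg.2 hx.2)] at hy
    rw [← affine]
    exact feynmanCombination_pos hA hB hC ⟨hx.1, hy.1, sub_nonneg.2 hy.2⟩
  simp_rw [affine, integral_two_div_add_mul_cube hpos]
  ring_nf

lemma integral_one_sub_mul_add_div_sq_mul_sq (hA : 0 < A) (hB : 0 < B) (hC : 0 < C) :
    ∫ x in (0 : ℝ)..1, (1 - x) * ((x * A + (1 - x) * C) + (x * A + (1 - x) * B)) /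
        ((x * A + (1 - x) * C) ^ 2 * (x * A + (1 - x) * B) ^ 2) = 1 / (A * B * C) := by
  have pos {D : ℝ} (hD : 0 < D) (x : ℝ) (hx : x ∈ uIcc (0 : ℝ) 1) : 0 < x * A + (1 - x) * D := by
    rw [uIcc_of_le zero_le_one] at hx
    exact convex_Ioi (0 : ℝ) hA hD hx.1 (sub_nonneg.2 hx.2) (by ring)
  -- If `D` and `E` denote the two affine functions of `w = 1 - x`, then `D - w D' = E - w E' = A`,
  -- whence `d/dw (w ^ 2 / (D E)) = A w (D + E) / (D E) ^ 2`.
  have deriv (x : ℝ) (hx : x ∈ uIcc (0 : ℝ) 1) :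
      HasDerivAt (fun x => -(1 - x) ^ 2 / (A * ((x * A + (1 - x) * C) * (x * A + (1 - x) * B))))
        ((1 - x) * ((x * A + (1 - x) * C) + (x * A + (1 - x) * B)) /
          ((x * A + (1 - x) * C) ^ 2 * (x * A + (1 - x) * B) ^ 2)) x := by
    have hxB := pos hB x hx
    have hxC := pos hC x hx
    have hlin (D : ℝ) : HasDerivAt (fun x => x * A + (1 - x) * D) (A - D) x := by
      convert! ((hasDerivAt_id x).mul_const A).add
        (((hasDerivAt_id x).const_sub 1).mul_const D) using 1
      ring
    convert! ((((hasDerivAt_id x).const_sub 1).fun_pow 2).fun_neg).fun_div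
      (((hlin C).fun_mul (hlin B)).const_mul A) (by positivity) using 1
    simp only [id]
    field_simp
    ring
  have hcont : ContinuousOn (fun x => (1 - x) * ((x * A + (1 - x) * C) + (x * A + (1 - x) * B)) /
      ((x * A + (1 - x) * C) ^ 2 * (x * A + (1 - x) * B) ^ 2)) (uIcc 0 1) :=
    .div (by fun_prop) (by fun_prop) fun x hx =>
      (mul_pos (pow_pos (pos hC x hx) 2) (pow_pos (pos hB x hx) 2)).ne'
  rw [intervalIntegral.integral_eq_sub_of_hasDerivAt deriv hcont.intervalIntegrable]
  simp only [sub_self, sub_zero, zero_mul, one_mul, zero_add, add_zero, one_pow]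
  field_simp
  simp

theorem two_mul_setIntegral_feynmanCombination_rpow_neg_three (hA : 0 < A) (hB : 0 < B)
    (hC : 0 < C) :
    2 * ∫ z in feynmanSimplex, feynmanCombination A B C z ^ (-3 : ℝ) = 1 / (A * B * C) := by
  have hcube (z : ℝ × ℝ) (hz : z ∈ feynmanSimplex) :
      2 * feynmanCombination A B C z ^ (-3 : ℝ) = 2 / feynmanCombination A B C z ^ 3 := by
    rw [rpow_neg (feynmanCombination_pos hA hB hC hz).le, rpow_ofNat, div_eq_mul_inv]
  have hcont : ContinuousOn (fun z => 2 / feynmanCombination A B C z ^ 3) feynmanSimplex :=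
    .div (by fun_prop) (by fun_prop) fun z hz =>
      (pow_pos (feynmanCombination_pos hA hB hC hz) 3).ne'
  rw [← integral_const_mul, setIntegral_congr_fun isCompact_feynmanSimplex.measurableSet hcube,
    setIntegral_feynmanSimplex (hcont.integrableOn_compact isCompact_feynmanSimplex),
    ← integral_one_sub_mul_add_div_sq_mul_sq hA hB hC]
  refine intervalIntegral.integral_congr fun x hx => ?_
  rw [uIcc_of_le zero_le_one] at hx
  exact integral_two_div_feynmanCombination_cube hA hB hC hx

end FeynmanIdentity

section ThreePropagators

open Module

/-- The constant `Δ` left over when the square is completed in Feynman's combined denominator, for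
propagators with centres `a`, `b`, `c` and squared masses `m₁`, `m₂`, `m₃`. -/
noncomputable def feynmanDelta {V : Type*} [NormedAddCommGroup V] (a b c : V)
    (m₁ m₂ m₃ : ℝ) (z : ℝ × ℝ) : ℝ :=
  z.1 * z.2 * ‖a - b‖ ^ 2 + z.1 * (1 - z.1 - z.2) * ‖a - c‖ ^ 2 +
    z.2 * (1 - z.1 - z.2) * ‖b - c‖ ^ 2 + feynmanCombination m₁ m₂ m₃ z

variable {m₁ m₂ m₃ : ℝ}

lemma feynmanDelta_pos {V : Type*} [NormedAddCommGroup V] (h₁ : 0 < m₁) (h₂ : 0 < m₂)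
    (h₃ : 0 < m₃) (a b c : V) {z : ℝ × ℝ} (hz : z ∈ feynmanSimplex) :
    0 < feynmanDelta a b c m₁ m₂ m₃ z := by
  have hm := feynmanCombination_pos h₁ h₂ h₃ hz
  obtain ⟨hx, hy, hxy⟩ := hz
  unfold feynmanDelta
  positivity

lemma feynmanCombination_norm_sub_sq_add {V : Type*} [NormedAddCommGroup V] [InnerProductSpace ℝ V]
    (a b c q : V) (z : ℝ × ℝ) :
    feynmanCombination (‖q - a‖ ^ 2 + m₁) (‖q - b‖ ^ 2 + m₂) (‖q - c‖ ^ 2 + m₃) z =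
      ‖q - feynmanCombination a b c z‖ ^ 2 + feynmanDelta a b c m₁ m₂ m₃ z := by
  simp only [feynmanCombination, feynmanDelta, smul_eq_mul, ← real_inner_self_eq_norm_sq,
    inner_sub_left, inner_sub_right, inner_add_left, inner_add_right, real_inner_smul_left,
    real_inner_smul_right, real_inner_comm q, real_inner_comm a b, real_inner_comm a c,
    real_inner_comm b c]
  ring

lemma dual_sub_div_eq_setIntegral_feynmanSimplex (h₁ : 0 < m₁) (h₂ : 0 < m₂) (h₃ : 0 < m₃)
    {V : Type*} [NormedAddCommGroup V] [NormedSpace ℝ V] (ℓ : StrongDual ℝ V) (a b c v q : V) :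
    ℓ (q - v) / ((‖q - a‖ ^ 2 + m₁) * (‖q - b‖ ^ 2 + m₂) * (‖q - c‖ ^ 2 + m₃)) =
      2 * ∫ z in feynmanSimplex, ℓ (q - v) * feynmanCombination (‖q - a‖ ^ 2 + m₁)
        (‖q - b‖ ^ 2 + m₂) (‖q - c‖ ^ 2 + m₃) z ^ (-3 : ℝ) := by
  rw [integral_const_mul, mul_left_comm, two_mul_setIntegral_feynmanCombination_rpow_neg_three
    (by positivity) (by positivity) (by positivity), mul_one_div]

lemma feynmanCombination_zero_neg_sub {V : Type*} [AddCommGroup V] [Module ℝ V] (k p : V)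
    (z : ℝ × ℝ) :
    feynmanCombination 0 k (-p) z - k = (1 - z.1 - z.2) • (-k - p) - z.1 • k := by
  unfold feynmanCombination
  module

lemma feynmanDelta_zero_neg {V : Type*} [NormedAddCommGroup V] (k p : V) (m : ℝ) (z : ℝ × ℝ) :
    feynmanDelta 0 k (-p) m m m z = z.1 * z.2 * ‖k‖ ^ 2 + z.1 * (1 - z.1 - z.2) * ‖p‖ ^ 2 +
      z.2 * (1 - z.1 - z.2) * ‖k + p‖ ^ 2 + m := by
  simp only [feynmanDelta, feynmanCombination, zero_sub, norm_neg, sub_neg_eq_add,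
    zero_add, smul_eq_mul]
  ring

variable {E : Type*} [NormedAddCommGroup E] [InnerProductSpace ℝ E] [FiniteDimensional ℝ E]
  [MeasurableSpace E] [BorelSpace E]

lemma integrable_dual_sub_mul_feynmanCombination_rpow_neg (h₁ : 0 < m₁) (h₂ : 0 < m₂) (h₃ : 0 < m₃)
    {s : ℝ} (hs : (finrank ℝ E + 1) / 2 < s) (ℓ : StrongDual ℝ E) (a b c v : E) :
    Integrable (fun w : E × (ℝ × ℝ) => ℓ (w.1 - v) * feynmanCombination (‖w.1 - a‖ ^ 2 + m₁)
      (‖w.1 - b‖ ^ 2 + m₂) (‖w.1 - c‖ ^ 2 + m₃) w.2 ^ (-s))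
      (volume.prod (volume.restrict feynmanSimplex)) := by
  have hs₀ : 0 ≤ s := (by positivity : (0 : ℝ) ≤ (finrank ℝ E + 1) / 2).trans hs.le
  have hterm (d : E) {m : ℝ} (hm : 0 < m) :=
    (integrable_dual_sub_mul_norm_sub_sq_add_rpow_neg hm hs ℓ d v).norm
  have hdom := (((hterm a h₁).add (hterm b h₂)).add (hterm c h₃)).comp_fst
    (volume.restrict feynmanSimplex)
  refine hdom.mono' (Measurable.aestronglyMeasurable (by unfold feynmanCombination; fun_prop)) ?_
  filter_upwards [Measure.quasiMeasurePreserving_snd.ae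
    (ae_restrict_mem isCompact_feynmanSimplex.measurableSet)] with ⟨q, z⟩ hz
  have hA : 0 < ‖q - a‖ ^ 2 + m₁ := by positivity
  have hB : 0 < ‖q - b‖ ^ 2 + m₂ := by positivity
  have hC : 0 < ‖q - c‖ ^ 2 + m₃ := by positivity
  have hcomb := feynmanCombination_pos hA hB hC hz
  simp only [Pi.add_apply, norm_mul, norm_of_nonneg (rpow_nonneg hA.le _),
    norm_of_nonneg (rpow_nonneg hB.le _), norm_of_nonneg (rpow_nonneg hC.le _),
    norm_of_nonneg (rpow_nonneg hcomb.le _), ← mul_add]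
  gcongr
  exact feynmanCombination_rpow_neg_le hs₀ hA hB hC hz

lemma integral_dual_sub_mul_feynmanCombination_rpow_neg (h₁ : 0 < m₁) (h₂ : 0 < m₂) (h₃ : 0 < m₃)
    {s : ℝ} (hs : (finrank ℝ E + 1) / 2 < s) (ℓ : StrongDual ℝ E) (a b c v : E) {z : ℝ × ℝ}
    (hz : z ∈ feynmanSimplex) :
    ∫ q : E, ℓ (q - v) * feynmanCombination (‖q - a‖ ^ 2 + m₁) (‖q - b‖ ^ 2 + m₂)
        (‖q - c‖ ^ 2 + m₃) z ^ (-s) =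
      π ^ (finrank ℝ E / 2 : ℝ) * Gamma (s - finrank ℝ E / 2) / Gamma s *
        (ℓ (feynmanCombination a b c z - v) *
          feynmanDelta a b c m₁ m₂ m₃ z ^ (finrank ℝ E / 2 - s)) := by
  simp_rw [feynmanCombination_norm_sub_sq_add]
  exact integral_dual_sub_mul_norm_sub_sq_add_rpow_neg (feynmanDelta_pos h₁ h₂ h₃ a b c hz) hs ℓ _ v

theorem integral_three_propagators_shifted_coord_general (hE : finrank ℝ E ≤ 4) (h₁ : 0 < m₁)
    (h₂ : 0 < m₂) (h₃ : 0 < m₃) (ℓ : StrongDual ℝ E) (a b c v : E) :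
    Integrable (fun q : E =>
      ℓ (q - v) / ((‖q - a‖ ^ 2 + m₁) * (‖q - b‖ ^ 2 + m₂) * (‖q - c‖ ^ 2 + m₃))) ∧
    ∫ q : E, ℓ (q - v) / ((‖q - a‖ ^ 2 + m₁) * (‖q - b‖ ^ 2 + m₂) * (‖q - c‖ ^ 2 + m₃)) =
      π ^ (finrank ℝ E / 2 : ℝ) * Gamma (3 - finrank ℝ E / 2) *
        ∫ x in (0 : ℝ)..1, ∫ y in (0 : ℝ)..(1 - x),
          ℓ (feynmanCombination a b c (x, y) - v) *
            feynmanDelta a b c m₁ m₂ m₃ (x, y) ^ (finrank ℝ E / 2 - 3 : ℝ) := by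
  have hs : ((finrank ℝ E : ℝ) + 1) / 2 < 3 := by
    have : (finrank ℝ E : ℝ) ≤ 4 := mod_cast hE
    linarith
  have hint := integrable_dual_sub_mul_feynmanCombination_rpow_neg h₁ h₂ h₃ hs ℓ a b c v
  have hloop (z : ℝ × ℝ) (hz : z ∈ feynmanSimplex) :=
    integral_dual_sub_mul_feynmanCombination_rpow_neg h₁ h₂ h₃ hs ℓ a b c v hz
  simp_rw [dual_sub_div_eq_setIntegral_feynmanSimplex h₁ h₂ h₃ ℓ a b c v]
  refine ⟨hint.integral_prod_left.const_mul 2, ?_⟩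
  have hm := isCompact_feynmanSimplex.measurableSet
  rw [integral_const_mul, integral_integral_swap hint, setIntegral_congr_fun hm hloop,
    setIntegral_feynmanSimplex (IntegrableOn.congr_fun hint.integral_prod_right hloop hm)]
  simp_rw [intervalIntegral.integral_const_mul, ← mul_assoc]
  have hΓ : Gamma 3 = 2 := by simp [Gamma_ofNat_eq_factorial, Nat.factorial]
  rw [hΓ]
  ring

end ThreePropagators

/-- Identity (int-q6): the three-propagator integral with factor `(q-k)_μ`,
in Feynman parametrization. -/
theorem integral_three_propagators_shifted_coord (M : ℝ) (hM : 0 < M)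
    (k p : EuclideanSpace ℝ (Fin 4)) (μ : Fin 4) :
    Integrable (fun q : EuclideanSpace ℝ (Fin 4) =>
      (q - k) μ / ((‖q‖ ^ 2 + M ^ 2) * (‖q - k‖ ^ 2 + M ^ 2) * (‖q + p‖ ^ 2 + M ^ 2))) ∧
    ∫ q : EuclideanSpace ℝ (Fin 4),
        (q - k) μ / ((‖q‖ ^ 2 + M ^ 2) * (‖q - k‖ ^ 2 + M ^ 2) * (‖q + p‖ ^ 2 + M ^ 2)) =
      π ^ 2 * ∫ β₁ in (0 : ℝ)..1, ∫ β₂ in (0 : ℝ)..(1 - β₁),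
        ((1 - β₁ - β₂) • (-k - p) - β₁ • k) μ /
          (β₁ * β₂ * ‖k‖ ^ 2 + β₁ * (1 - β₁ - β₂) * ‖p‖ ^ 2 +
            β₂ * (1 - β₁ - β₂) * ‖k + p‖ ^ 2 + M ^ 2) := by
  have h := integral_three_propagators_shifted_coord_general (finrank_euclideanSpace_fin).le
    (pow_pos hM 2) (pow_pos hM 2) (pow_pos hM 2) (EuclideanSpace.proj μ) 0 k (-p) k
  norm_num [feynmanCombination_zero_neg_sub, feynmanDelta_zero_neg, rpow_neg_one,
    ← div_eq_mul_inv] at h ⊢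
  exact h
end
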